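/- (Chiodo) There is no general procedure to find a torsion element in a finitely presented group known to have torsion: there is no computable function g : ℕ × List (List (ℕ × Bool)) → List (ℕ × Bool) such that for every encoded finite presentation P whose presented group G_P contains a nontrivial element of finite order (∃ x : G_P, x ≠ 1 ∧ IsOfFinOrder x), the element π_P (FreeGroup.mk (g P)) is nontrivial and of finite order in G_P. -/

import Mathlib

/-- The set of relators of the finite presentation encoded by
`P = (n, L) : ℕ × List (List (ℕ × Bool))`: the words in `L`, together with all
generators `FreeGroup.of i` for `i ≥ n`. -/
def presRels (P : ℕ × List (List (ℕ × Bool))) : Set (FreeGroup ℕ) :=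
  {r | ∃ w ∈ P.2, r = FreeGroup.mk w} ∪ {r | ∃ i : ℕ, P.1 ≤ i ∧ r = FreeGroup.of i}

/-- The group presented by an encoded finite presentation. -/
def presGroup (P : ℕ × List (List (ℕ × Bool))) : Type :=
  PresentedGroup (presRels P)

instance (P : ℕ × List (List (ℕ × Bool))) : Group (presGroup P) :=
  inferInstanceAs (Group (PresentedGroup (presRels P)))

/-- The canonical projection from the free group to the presented group. -/
def presProj (P : ℕ × List (List (ℕ × Bool))) : FreeGroup ℕ →* presGroup P :=
  PresentedGroup.mk (presRels P)



section HNNPart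
open HNNExtension HNNExtension.NormalWord

theorem hnn_tu_mem {G : Type} [Group G] (A B : Subgroup G) (φ : A ≃* B) (S : Subgroup G)
    (h : ∀ a : A, (a : G) ∈ S ↔ (φ a : G) ∈ S) (u : ℤˣ) (w : ReducedWord G A B)
    (h1 : w.head ∈ S) (h2 : ∀ p ∈ w.toList, p.2 ∈ S) :
    ∃ w' : ReducedWord G A B, w'.head ∈ S ∧ (∀ p ∈ w'.toList, p.2 ∈ S) ∧
      w'.prod φ = t ^ (u : ℤ) * w.prod φ := by
  obtain ⟨g, l, hc⟩ := w
  simp only at h1 h2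
  by_cases hcan : g ∈ toSubgroup A B u ∧ ∃ g' l', l = (-u, g') :: l'
  · obtain ⟨hg, g', l', rfl⟩ := hcan
    have hS : ((toSubgroupEquiv φ u ⟨g, hg⟩ : toSubgroup A B (-u)) : G) ∈ S ∧
        (of ((toSubgroupEquiv φ u ⟨g, hg⟩ : toSubgroup A B (-u)) : G) : HNNExtension G A B φ)
          = t ^ (u : ℤ) * of g * t ^ (-(u : ℤ)) := by
      rcases Int.units_eq_one_or u with rfl | rfl
      · have hg' : g ∈ A := hg
        have : ((toSubgroupEquiv φ 1 ⟨g, hg⟩ : toSubgroup A B (-1)) : G) = φ ⟨g, hg'⟩ := rfl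
        rw [this]
        refine ⟨(h ⟨g, hg'⟩).1 h1, ?_⟩
        rw [equiv_eq_conj]; simp
      · have hg' : g ∈ B := hg
        have : ((toSubgroupEquiv φ (-1) ⟨g, hg⟩ : toSubgroup A B (- -1)) : G)
          = φ.symm ⟨g, hg'⟩ := rfl
        rw [this]
        refine ⟨(h (φ.symm ⟨g, hg'⟩)).2 (by simpa using h1), ?_⟩
        rw [equiv_symm_eq_conj]; simp
    refine ⟨⟨(toSubgroupEquiv φ u ⟨g, hg⟩ : toSubgroup A B (-u)) * g', l', ?_⟩, ?_, ?_, ?_⟩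
    · exact hc.tail
    · exact S.mul_mem hS.1 (h2 (-u, g') (by simp))
    · intro p hp
      exact h2 p (by simp [hp])
    · simp only [ReducedWord.prod, map_mul, hS.2, List.map_cons, List.prod_cons, Units.val_neg]
      group
  · refine ⟨⟨1, (u, g) :: l, ?_⟩, S.one_mem, ?_, ?_⟩
    · cases l with
      | nil => simp
      | cons p l' =>
        refine List.IsChain.cons_cons ?_ hc
        intro hg
        by_contra hne
        apply hcan
        refine ⟨hg, p.2, l', ?_⟩
        have : p.1 = -u := by
          rcases Int.units_eq_one_or u with h | h <;>
          rcases Int.units_eq_one_or p.1 with h' | h' <;> simp_all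
        rw [← this]
    · intro p hp
      rcases List.mem_cons.1 hp with rfl | hp
      · exact h1
      · exact h2 p hp
    · simp [ReducedWord.prod, mul_assoc]

theorem hnn_closure {G : Type} [Group G] (A B : Subgroup G) (φ : A ≃* B) (S : Subgroup G)
    (h : ∀ a : A, (a : G) ∈ S ↔ (φ a : G) ∈ S) (g : G)
    (hg : (of g : HNNExtension G A B φ) ∈ Subgroup.closure (of '' (S : Set G) ∪ {t})) : g ∈ S := by
  have key : ∀ x ∈ Subgroup.closure ((of : G → HNNExtension G A B φ) '' (S : Set G) ∪ {t}),
      ∃ w' : ReducedWord G A B, w'.head ∈ S ∧ (∀ p ∈ w'.toList, p.2 ∈ S) ∧ w'.prod φ = x := by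
    intro x hx
    have hof : ∀ s ∈ S, ∀ y : HNNExtension G A B φ, (∃ w' : ReducedWord G A B, w'.head ∈ S ∧ (∀ p ∈ w'.toList, p.2 ∈ S) ∧
        w'.prod φ = y) → (∃ w' : ReducedWord G A B, w'.head ∈ S ∧ (∀ p ∈ w'.toList, p.2 ∈ S) ∧
        w'.prod φ = of s * y) := by
      rintro s hs y ⟨w, h1, h2, rfl⟩
      refine ⟨⟨s * w.head, w.toList, w.chain⟩, S.mul_mem hs h1, h2, ?_⟩
      simp [ReducedWord.prod, mul_assoc]
    induction hx using Subgroup.closure_induction_left with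
    | one => exact ⟨ReducedWord.empty G A B, S.one_mem, by simp, by simp [ReducedWord.prod]⟩
    | mul_left x hx y _ ih =>
      rcases hx with ⟨s, hs, rfl⟩ | rfl
      · exact hof s hs y ih
      · obtain ⟨w, h1, h2, rfl⟩ := ih
        simpa using hnn_tu_mem A B φ S h 1 w h1 h2
    | inv_mul_cancel x hx y _ ih =>
      rcases hx with ⟨s, hs, rfl⟩ | rfl
      · rw [← map_inv]
        exact hof _ (S.inv_mem hs) y ih
      · obtain ⟨w, h1, h2, rfl⟩ := ih
        simpa using hnn_tu_mem A B φ S h (-1) w h1 h2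
  obtain ⟨w, h1, h2, h3⟩ := key _ hg
  have := ReducedWord.toList_eq_nil_of_mem_of_range φ w (by rw [h3]; exact ⟨g, rfl⟩)
  simp [ReducedWord.prod, this] at h3
  rw [← of_injective (φ := φ) h3]
  exact h1

theorem multi_hnn_list {G : Type} [Group G] {ι : Type} [DecidableEq ι] (A B : ι → Subgroup G)
    (φ : ∀ i, A i ≃* B i) (S : Subgroup G)
    (h : ∀ i (a : A i), (a : G) ∈ S ↔ (φ i a : G) ∈ S) (l : List ι) :
    ∃ (G' : Type) (_ : Group G') (j : G →* G') (r : ι → G') (S' : Subgroup G'),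
      Function.Injective j ∧ (∀ i, r i ∈ S') ∧ (∀ g, j g ∈ S' ↔ g ∈ S) ∧
      (∀ i ∈ l, ∀ a : A i, r i * j a * (r i)⁻¹ = j (φ i a)) := by
  induction l with
  | nil =>
    exact ⟨G, inferInstance, MonoidHom.id G, fun _ => 1, S, fun _ _ h => h, fun _ => S.one_mem,
      fun _ => Iff.rfl, by simp⟩
  | cons k l ih =>
    obtain ⟨G₁, hG₁, j, r, S₁, hj, hr, hS, hrel⟩ := ih
    let A' := (A k).map j
    let B' := (B k).map j
    let φ' : A' ≃* B' := ((A k).equivMapOfInjective j hj).symm.trans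
      ((φ k).trans ((B k).equivMapOfInjective j hj))
    have hφ' : ∀ a : A k, ∀ h, (φ' ⟨j a, h⟩ : G₁) = j (φ k a) := by
      intro a h'
      have : ((A k).equivMapOfInjective j hj).symm ⟨j a, h'⟩ = a := by
        rw [MulEquiv.symm_apply_eq]
        ext; simp
      change (((B k).equivMapOfInjective j hj (φ k (((A k).equivMapOfInjective j hj).symm ⟨j a, h'⟩)) :
        (B k).map j) : G₁) = j (φ k a)
      rw [this]
      exact Subgroup.coe_equivMapOfInjective_apply _ _ _ _
    have hcomp : ∀ a : A', (a : G₁) ∈ S₁ ↔ (φ' a : G₁) ∈ S₁ := by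
      rintro ⟨a, ha⟩
      obtain ⟨b, hb, rfl⟩ := ha
      have e := hφ' ⟨b, hb⟩ ⟨b, hb, rfl⟩
      change j b ∈ S₁ ↔ _
      refine Iff.trans ?_ (iff_of_eq (congrArg (· ∈ S₁) e.symm))
      rw [hS, hS]
      exact h k ⟨b, hb⟩
    refine ⟨HNNExtension G₁ A' B' φ', inferInstance, of.comp j,
      fun i => if i = k then t else of (r i), Subgroup.closure (of '' (S₁ : Set G₁) ∪ {t}),
      fun a b hab => hj (of_injective (φ := φ') hab), ?_, ?_, ?_⟩
    · intro i
      apply Subgroup.subset_closure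
      by_cases hi : i = k
      · simp [hi]
      · left
        simp only [hi, if_false]
        exact ⟨r i, hr i, rfl⟩
    · intro g
      rw [← hS]
      constructor
      · exact hnn_closure A' B' φ' S₁ hcomp (j g)
      · intro hg
        exact Subgroup.subset_closure (Or.inl ⟨j g, hg, rfl⟩)
    · intro i hi a
      by_cases hik : i = k
      · subst hik
        simp only [if_true, MonoidHom.comp_apply]
        rw [← hφ' a ⟨a, a.2, rfl⟩]
        rw [equiv_eq_conj]
      · have : i ∈ l := by
          rcases List.mem_cons.1 hi with h | h
          · exact absurd h hik
          · exact h
        simp only [hik, if_false, MonoidHom.comp_apply]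
        rw [← hrel i this a]
        simp

theorem multi_hnn {G : Type} [Group G] {ι : Type} [Finite ι] (A B : ι → Subgroup G)
    (φ : ∀ i, A i ≃* B i) (S : Subgroup G)
    (h : ∀ i (a : A i), (a : G) ∈ S ↔ (φ i a : G) ∈ S) :
    ∃ (G' : Type) (_ : Group G') (j : G →* G') (r : ι → G') (S' : Subgroup G'),
      Function.Injective j ∧ (∀ i, r i ∈ S') ∧ (∀ g, j g ∈ S' ↔ g ∈ S) ∧
      (∀ i, ∀ a : A i, r i * j a * (r i)⁻¹ = j (φ i a)) := by
  classical
  have := Fintype.ofFinite ι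
  obtain ⟨G', i1, j, r, S', h1, h2, h3, h4⟩ := multi_hnn_list A B φ S h (Finset.univ.toList)
  exact ⟨G', i1, j, r, S', h1, h2, h3, fun i => h4 i (by simp)⟩

end HNNPart

section MachinePart

/-- an affine rule on configurations `St × ℤ × ℤ` -/
structure AffRule (St : Type) where
  s : St
  i1 : ℤ
  i2 : ℤ
  m1 : ℤ
  m2 : ℤ
  s' : St
  j1 : ℤ
  j2 : ℤ
  l1 : ℤ
  l2 : ℤ
  hm1 : m1 ≠ 0
  hm2 : m2 ≠ 0
  hl1 : l1 ≠ 0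
  hl2 : l2 ≠ 0

namespace AffRule
variable {St : Type}

def src (ρ : AffRule St) (z : ℤ × ℤ) : St × ℤ × ℤ := (ρ.s, ρ.i1 + ρ.m1 * z.1, ρ.i2 + ρ.m2 * z.2)
def dst (ρ : AffRule St) (z : ℤ × ℤ) : St × ℤ × ℤ := (ρ.s', ρ.j1 + ρ.l1 * z.1, ρ.j2 + ρ.l2 * z.2)

end AffRule

/-- configurations connected to a halting origin -/
inductive AConn {St Rule : Type} (R : Rule → AffRule St) (Hs : Set St) : St × ℤ × ℤ → Prop
  | base (s : St) (h : s ∈ Hs) : AConn R Hs (s, 0, 0)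
  | fwd (ρ : Rule) (z : ℤ × ℤ) (h : AConn R Hs ((R ρ).src z)) : AConn R Hs ((R ρ).dst z)
  | bwd (ρ : Rule) (z : ℤ × ℤ) (h : AConn R Hs ((R ρ).dst z)) : AConn R Hs ((R ρ).src z)

inductive BGen (St Rule : Type)
  | x | y | t (s : St) | r (ρ : Rule) | κ | τ

abbrev MGen (St Rule : Type) := BGen St Rule ⊕ Option (BGen St Rule)

inductive RIdx (St Rule : Type)
  | xy | rx (ρ : Rule) | ry (ρ : Rule) | rt (ρ : Rule) | kr (ρ : Rule) | kt (s : St)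
  | sq | sv (b : BGen St Rule)

/-- translates of a letter -/
def transl {H : Type*} [Group H] (x y t : H) (L R : ℤ) : H := (y ^ R * x ^ L)⁻¹ * t * (y ^ R * x ^ L)

theorem map_transl {H H' : Type*} [Group H] [Group H'] (f : H →* H') (x y t : H) (L R : ℤ) :
    f (transl x y t L R) = transl (f x) (f y) (f t) L R := by
  simp [transl]

section rels
variable {St Rule : Type}

def bof (b : BGen St Rule) : FreeGroup (MGen St Rule) := FreeGroup.of (Sum.inl b)
def sof (b : BGen St Rule) : FreeGroup (MGen St Rule) := FreeGroup.of (Sum.inr (some b))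
def yof : FreeGroup (MGen St Rule) := FreeGroup.of (Sum.inr none)
def vel : FreeGroup (MGen St Rule) := bof .κ * bof .τ * (bof .κ)⁻¹ * (bof .τ)⁻¹
def wel : FreeGroup (MGen St Rule) := yof * vel * yof⁻¹ * vel⁻¹

open Classical in
noncomputable def mrel (R : Rule → AffRule St) (Hs : Set St) : RIdx St Rule → FreeGroup (MGen St Rule)
  | .xy => bof .x * bof .y * (bof .x)⁻¹ * (bof .y)⁻¹
  | .rx ρ => bof (.r ρ) * (bof .x) ^ (R ρ).m1 * (bof (.r ρ))⁻¹ * ((bof .x) ^ (R ρ).l1)⁻¹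
  | .ry ρ => bof (.r ρ) * (bof .y) ^ (R ρ).m2 * (bof (.r ρ))⁻¹ * ((bof .y) ^ (R ρ).l2)⁻¹
  | .rt ρ => bof (.r ρ) * transl (bof .x) (bof .y) (bof (.t (R ρ).s)) (R ρ).i1 (R ρ).i2 *
      (bof (.r ρ))⁻¹ * (transl (bof .x) (bof .y) (bof (.t (R ρ).s')) (R ρ).j1 (R ρ).j2)⁻¹
  | .kr ρ => bof .κ * bof (.r ρ) * (bof .κ)⁻¹ * (bof (.r ρ))⁻¹
  | .kt s => if s ∈ Hs then bof .κ * bof (.t s) * (bof .κ)⁻¹ * (bof (.t s))⁻¹ else 1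
  | .sq => wel * wel
  | .sv b => sof b * vel * (sof b)⁻¹ * (bof b)⁻¹

def trel (s0 : St) (R0 : ℕ) : FreeGroup (MGen St Rule) :=
  ((bof .y) ^ R0)⁻¹ * bof (.t s0) * (bof .y) ^ R0 * (bof .τ)⁻¹

theorem conn_kills (R : Rule → AffRule St) (Hs : Set St) (s0 : St) (R0 : ℕ)
    (hc : AConn R Hs (s0, 0, (R0 : ℤ))) {H : Type*} [Group H] (f : FreeGroup (MGen St Rule) →* H)
    (hf : ∀ i, f (mrel R Hs i) = 1) (ht : f (trel s0 R0) = 1) (b : BGen St Rule) :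
    f (bof b) = 1 := by
  have hxy : Commute (f (bof .x)) (f (bof .y)) := by
    have := hf .xy
    simp only [mrel, map_mul, map_inv] at this
    rw [mul_inv_eq_one, mul_inv_eq_iff_eq_mul] at this
    exact this
  have hr : ∀ ρ z, f (bof (.r ρ)) * transl (f (bof .x)) (f (bof .y)) (f (bof (.t ((R ρ).src z).1)))
        ((R ρ).src z).2.1 ((R ρ).src z).2.2 * (f (bof (.r ρ)))⁻¹ =
      transl (f (bof .x)) (f (bof .y)) (f (bof (.t ((R ρ).dst z).1)))
        ((R ρ).dst z).2.1 ((R ρ).dst z).2.2 := by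
    intro ρ z
    have h1 := hf (.rx ρ)
    have h2 := hf (.ry ρ)
    have h3 := hf (.rt ρ)
    simp only [mrel, map_mul, map_inv, map_zpow, map_transl, mul_inv_eq_one] at h1 h2 h3
    simp only [AffRule.src, AffRule.dst]
    have key : ∀ (t : H) (i1 i2 m1 m2 z1 z2 : ℤ), transl (f (bof .x)) (f (bof .y)) t (i1 + m1 * z1) (i2 + m2 * z2)
       = ((f (bof .y) ^ m2) ^ z2 * (f (bof .x) ^ m1) ^ z1)⁻¹ * transl (f (bof .x)) (f (bof .y)) t i1 i2 *
        ((f (bof .y) ^ m2) ^ z2 * (f (bof .x) ^ m1) ^ z1) := by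
      intro t i1 i2 m1 m2 z1 z2
      have : f (bof .y) ^ (i2 + m2 * z2) * f (bof .x) ^ (i1 + m1 * z1) =
        (f (bof .y) ^ i2 * f (bof .x) ^ i1) * ((f (bof .y) ^ m2) ^ z2 * (f (bof .x) ^ m1) ^ z1) := by
        rw [zpow_add, zpow_add, zpow_mul, zpow_mul]
        have : Commute (f (bof .x) ^ i1) ((f (bof .y) ^ m2) ^ z2) := by
          rw [← zpow_mul]
          exact (hxy.zpow_zpow _ _)
        rw [mul_assoc, mul_assoc, ← mul_assoc _ (f (bof .x) ^ i1), ← this.eq]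
        simp only [mul_assoc]
      rw [transl, this, transl]
      group
    rw [key, key, ← h1, ← h2, ← h3]
    simp only [conj_zpow]
    group
  have hkr : ∀ ρ, Commute (f (bof .κ)) (f (bof (.r ρ))) := by
    intro ρ
    have := hf (.kr ρ)
    simp only [mrel, map_mul, map_inv] at this
    rw [mul_inv_eq_one, mul_inv_eq_iff_eq_mul] at this
    exact this
  have hk : ∀ c, AConn R Hs c → Commute (f (bof .κ)) (transl (f (bof .x)) (f (bof .y)) (f (bof (.t c.1))) c.2.1 c.2.2) := by
    intro c hc
    induction hc with
    | base s h =>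
      have := hf (.kt s)
      simp only [mrel, if_pos h, map_mul, map_inv] at this
      rw [mul_inv_eq_one, mul_inv_eq_iff_eq_mul] at this
      have this' : Commute (f (bof .κ)) (f (bof (.t s))) := this
      simpa [transl] using this'
    | fwd ρ z h ih =>
      rw [← hr]
      exact ((hkr ρ).mul_right ih).mul_right (hkr ρ).inv_right
    | bwd ρ z h ih =>
      have e := hr ρ z
      rw [mul_inv_eq_iff_eq_mul, ← eq_inv_mul_iff_mul_eq] at e
      rw [e]
      exact ((hkr ρ).inv_right).mul_right (ih.mul_right (hkr ρ))
  have hv : f vel = 1 := by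
    have h1 := hk _ hc
    simp only [trel, map_mul, map_inv, map_pow, mul_inv_eq_one] at ht
    simp only [transl, zpow_zero, mul_one, zpow_natCast, ht] at h1
    simp only [vel, map_mul, map_inv]
    rw [mul_inv_eq_one, mul_inv_eq_iff_eq_mul]
    exact h1
  have := hf (.sv b)
  simpa [mrel, hv] using this

end rels
end MachinePart

section ModelPart

theorem multi_hnn' {G : Type} [Group G] {ι : Type} [Finite ι] (K : ι → Type) [∀ i, Group (K i)]
    (J J' : ∀ i, K i →* G) (hJ : ∀ i, Function.Injective (J i)) (hJ' : ∀ i, Function.Injective (J' i))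
    (S : Subgroup G) (h : ∀ i k, J i k ∈ S ↔ J' i k ∈ S) :
    ∃ (G' : Type) (_ : Group G') (j : G →* G') (r : ι → G') (S' : Subgroup G'),
      Function.Injective j ∧ (∀ i, r i ∈ S') ∧ (∀ g, j g ∈ S' ↔ g ∈ S) ∧
      (∀ i, ∀ k : K i, r i * j (J i k) * (r i)⁻¹ = j (J' i k)) := by
  obtain ⟨G', hG', j, r, S', h1, h2, h3, h4⟩ := multi_hnn (fun i => (J i).range) (fun i => (J' i).range)
    (fun i => (MonoidHom.ofInjective (hJ i)).symm.trans (MonoidHom.ofInjective (hJ' i))) S (by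
      intro i a
      obtain ⟨k, rfl⟩ := (MonoidHom.ofInjective (hJ i)).surjective a
      simpa [MonoidHom.ofInjective_apply] using h i k)
  refine ⟨G', hG', j, r, S', h1, h2, h3, ?_⟩
  intro i k
  simpa [MonoidHom.ofInjective_apply] using h4 i (MonoidHom.ofInjective (hJ i) k)

@[ext] structure Lamp (St : Type) where
  f : St × ℤ × ℤ → ℤ
  a : ℤ × ℤ

namespace Lamp
variable {St : Type}

instance : Mul (Lamp St) := ⟨fun p q => ⟨fun c => p.f c + q.f (c.1, c.2 + p.a), p.a + q.a⟩⟩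
instance : One (Lamp St) := ⟨⟨fun _ => 0, 0⟩⟩
instance : Inv (Lamp St) := ⟨fun p => ⟨fun c => - p.f (c.1, c.2 - p.a), - p.a⟩⟩

@[simp] theorem mul_f (p q : Lamp St) (c) : (p * q).f c = p.f c + q.f (c.1, c.2 + p.a) := rfl
@[simp] theorem mul_a (p q : Lamp St) : (p * q).a = p.a + q.a := rfl
@[simp] theorem one_f (c) : (1 : Lamp St).f c = 0 := rfl
@[simp] theorem one_a : (1 : Lamp St).a = 0 := rfl
@[simp] theorem inv_f (p : Lamp St) (c) : (p⁻¹).f c = - p.f (c.1, c.2 - p.a) := rfl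
@[simp] theorem inv_a (p : Lamp St) : (p⁻¹).a = - p.a := rfl

instance : Group (Lamp St) := Group.ofLeftAxioms
  (by
    intro p q r
    ext c
    · simp [add_assoc]
    · simp [add_assoc]
    · simp [add_assoc])
  (by
    intro p
    ext c <;> simp)
  (by
    intro p
    ext c <;> simp [sub_eq_add_neg])

def X : Lamp St := ⟨fun _ => 0, (1, 0)⟩
def Y : Lamp St := ⟨fun _ => 0, (0, 1)⟩
open Classical in
noncomputable def D (c : St × ℤ × ℤ) : Lamp St := ⟨fun c' => if c' = c then 1 else 0, 0⟩

def trHom : Multiplicative (ℤ × ℤ) →* Lamp St where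
  toFun a := ⟨fun _ => 0, a.toAdd⟩
  map_one' := rfl
  map_mul' a b := by ext c <;> simp

theorem X_zpow (n : ℤ) : (X : Lamp St) ^ n = ⟨fun _ => 0, (n, 0)⟩ := by
  have : (X : Lamp St) = trHom (Multiplicative.ofAdd (1, 0)) := rfl
  rw [this, ← map_zpow, ← ofAdd_zsmul]
  simp [trHom]

theorem Y_zpow (n : ℤ) : (Y : Lamp St) ^ n = ⟨fun _ => 0, (0, n)⟩ := by
  have : (Y : Lamp St) = trHom (Multiplicative.ofAdd (0, 1)) := rfl
  rw [this, ← map_zpow, ← ofAdd_zsmul]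
  simp [trHom]

open Classical in
theorem D_zpow (c : St × ℤ × ℤ) (n : ℤ) : (D c) ^ n = ⟨fun c' => if c' = c then n else 0, 0⟩ := by
  let F : Multiplicative ℤ →* Lamp St :=
    { toFun := fun n => ⟨fun c' => if c' = c then n.toAdd else 0, 0⟩
      map_one' := by ext c <;> simp
      map_mul' := by
        intro a b
        ext c'
        · by_cases h : c' = c
          · simp [h]
          · simp [h]
        · simp
        · simp }
  have : D c = F (Multiplicative.ofAdd 1) := rfl
  rw [this, ← map_zpow, ← ofAdd_zsmul]
  simp [F]

theorem transl_D (s : St) (L R : ℤ) : transl X Y (D (s, 0, 0)) L R = D (s, L, R) := by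
  rw [transl, X_zpow, Y_zpow]
  ext ⟨s', L', R'⟩
  · simp only [D, mul_f, inv_f, inv_a, mul_a]
    have : ((s', L' + -(0 + L), R' + -(R + 0)) = (s, (0 : ℤ), (0 : ℤ))) ↔ (s', L', R') = (s, L, R) := by
      simp only [Prod.mk.injEq]
      constructor
      · rintro ⟨a, b, c⟩; exact ⟨a, by omega, by omega⟩
      · rintro ⟨a, b, c⟩; exact ⟨a, by omega, by omega⟩
    by_cases h : (s', L', R') = (s, L, R)
    · have h' := this.2 h
      simp only [zero_add, add_zero, neg_add_rev] at h' ⊢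
      simp [h, h']
    · rw [if_neg h]
      split_ifs with h1
      · exact absurd (this.1 h1) h
      · simp
  · simp [D]
  · simp [D]

/-- embedding of the one-state lamplighter along an affine injection -/
noncomputable def emb (e : ℤ × ℤ → St × ℤ × ℤ) (he : Function.Injective e) (m1 m2 : ℤ)
    (h1 : ∀ z a, e (z + a) = ((e z).1, (e z).2 + (m1 * a.1, m2 * a.2))) :
    Lamp Unit →* Lamp St where
  toFun p := ⟨Function.extend e (fun z => p.f ((), z)) 0, (m1 * p.a.1, m2 * p.a.2)⟩
  map_one' := by
    ext c
    · by_cases h : ∃ z, e z = c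
      · obtain ⟨z, rfl⟩ := h
        simp [he.extend_apply]
      · simp [Function.extend_apply' _ _ _ h]
    · simp
    · simp
  map_mul' p q := by
    ext c
    · by_cases h : ∃ z, e z = c
      · obtain ⟨z, rfl⟩ := h
        simp only [mul_f, ← h1]
        rw [he.extend_apply, he.extend_apply, he.extend_apply]
      · have h' : ¬ ∃ z, e z = (c.1, c.2 + (m1 * p.a.1, m2 * p.a.2)) := by
          rintro ⟨z, hz⟩
          apply h
          refine ⟨z - p.a, ?_⟩
          have := h1 (z - p.a) p.a
          rw [sub_add_cancel, hz] at this
          simp only [Prod.ext_iff] at this ⊢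
          obtain ⟨a1, a2, a3⟩ := this
          simp at a1 a2 a3
          exact ⟨a1.symm, a2.symm, a3.symm⟩
        simp only [mul_f]
        rw [Function.extend_apply' _ _ _ h, Function.extend_apply' _ _ _ h, Function.extend_apply' _ _ _ h']
        simp
    · simp [mul_add]
    · simp [mul_add]

theorem emb_inj (e : ℤ × ℤ → St × ℤ × ℤ) (he : Function.Injective e) (m1 m2 : ℤ)
    (h1 : ∀ z a, e (z + a) = ((e z).1, (e z).2 + (m1 * a.1, m2 * a.2))) (hm1 : m1 ≠ 0) (hm2 : m2 ≠ 0) :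
    Function.Injective (emb e he m1 m2 h1) := by
  intro p q h
  have hf : ∀ c, Function.extend e (fun z => p.f ((), z)) 0 c = Function.extend e (fun z => q.f ((), z)) 0 c :=
    fun c => congrFun (congrArg Lamp.f h) c
  have ha := congrArg Lamp.a h
  simp [emb, hm1, hm2] at ha
  ext c
  · have := hf (e c.2)
    rw [he.extend_apply, he.extend_apply] at this
    exact this
  · exact ha.1
  · exact ha.2

def supp (P : St × ℤ × ℤ → Prop) : Subgroup (Lamp St) where
  carrier := {p | p.a = 0 ∧ ∀ c, ¬ P c → p.f c = 0}
  one_mem' := ⟨rfl, fun _ _ => rfl⟩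
  mul_mem' := by
    rintro p q ⟨h1, h2⟩ ⟨h3, h4⟩
    refine ⟨by simp [h1, h3], ?_⟩
    intro c hc
    simp [h1, h2 c hc, h4 c hc]
  inv_mem' := by
    rintro p ⟨h1, h2⟩
    refine ⟨by simp [h1], ?_⟩
    intro c hc
    simp [h1, h2 c hc]

theorem emb_mem (e : ℤ × ℤ → St × ℤ × ℤ) (he : Function.Injective e) (m1 m2 : ℤ)
    (h1 : ∀ z a, e (z + a) = ((e z).1, (e z).2 + (m1 * a.1, m2 * a.2))) (hm1 : m1 ≠ 0) (hm2 : m2 ≠ 0)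
    (P : St × ℤ × ℤ → Prop) (p : Lamp Unit) :
    emb e he m1 m2 h1 p ∈ supp P ↔ p.a = 0 ∧ ∀ z, ¬ P (e z) → p.f ((), z) = 0 := by
  change ((emb e he m1 m2 h1 p).a = 0 ∧ ∀ c, ¬ P c → Function.extend e (fun z => p.f ((), z)) 0 c = 0) ↔ _
  apply and_congr
  · simp [emb, hm1, hm2, Prod.ext_iff]
  · constructor
    · intro h z hz
      have := h (e z) hz
      rwa [he.extend_apply] at this
    · intro h c hc
      by_cases h' : ∃ z, e z = c
      · obtain ⟨z, rfl⟩ := h'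
        rw [he.extend_apply]
        exact h z hc
      · rw [Function.extend_apply' _ _ _ h']
        rfl

theorem D_mem (P : St × ℤ × ℤ → Prop) (c) : D c ∈ supp P ↔ P c := by
  classical
  constructor
  · rintro ⟨_, h⟩
    by_contra hc
    have := h c hc
    simp [D] at this
  · intro hc
    refine ⟨rfl, ?_⟩
    intro c' hc'
    have : c' ≠ c := by rintro rfl; exact hc' hc
    simp [D, this]

theorem emb_X (e : ℤ × ℤ → St × ℤ × ℤ) (he : Function.Injective e) (m1 m2 : ℤ)
    (h1 : ∀ z a, e (z + a) = ((e z).1, (e z).2 + (m1 * a.1, m2 * a.2))) :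
    emb e he m1 m2 h1 X = X ^ m1 := by
  rw [X_zpow]
  ext c
  · change Function.extend e (fun z => 0) 0 c = 0
    by_cases h : ∃ z, e z = c
    · obtain ⟨z, rfl⟩ := h
      simp [he.extend_apply]
    · simp [Function.extend_apply' _ _ _ h]
  · simp [emb, X]
  · simp [emb, X]

theorem emb_Y (e : ℤ × ℤ → St × ℤ × ℤ) (he : Function.Injective e) (m1 m2 : ℤ)
    (h1 : ∀ z a, e (z + a) = ((e z).1, (e z).2 + (m1 * a.1, m2 * a.2))) :
    emb e he m1 m2 h1 Y = Y ^ m2 := by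
  rw [Y_zpow]
  ext c
  · change Function.extend e (fun z => 0) 0 c = 0
    by_cases h : ∃ z, e z = c
    · obtain ⟨z, rfl⟩ := h
      simp [he.extend_apply]
    · simp [Function.extend_apply' _ _ _ h]
  · simp [emb, Y]
  · simp [emb, Y]

theorem emb_D (e : ℤ × ℤ → St × ℤ × ℤ) (he : Function.Injective e) (m1 m2 : ℤ)
    (h1 : ∀ z a, e (z + a) = ((e z).1, (e z).2 + (m1 * a.1, m2 * a.2))) :
    emb e he m1 m2 h1 (D ((), 0)) = D (e 0) := by
  ext c
  · change Function.extend e (fun z => (D ((), 0)).f ((), z)) 0 c = _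
    by_cases h : ∃ z, e z = c
    · obtain ⟨z, rfl⟩ := h
      rw [he.extend_apply]
      simp [D, he.eq_iff]
    · have : c ≠ e 0 := by rintro rfl; exact h ⟨0, rfl⟩
      simp [Function.extend_apply' _ _ _ h, D, this]
  · simp [emb, D]
  · simp [emb, D]

end Lamp

namespace AffRule
variable {St : Type} (ρ : AffRule St)
theorem src_inj : Function.Injective ρ.src := by
  intro a b h
  simp [src, ρ.hm1, ρ.hm2] at h
  exact Prod.ext h.1 h.2
theorem dst_inj : Function.Injective ρ.dst := by
  intro a b h
  simp [dst, ρ.hl1, ρ.hl2] at h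
  exact Prod.ext h.1 h.2
theorem src_add (z a) : ρ.src (z + a) = ((ρ.src z).1, (ρ.src z).2 + (ρ.m1 * a.1, ρ.m2 * a.2)) := by
  simp [src]; constructor <;> ring
theorem dst_add (z a) : ρ.dst (z + a) = ((ρ.dst z).1, (ρ.dst z).2 + (ρ.l1 * a.1, ρ.l2 * a.2)) := by
  simp [dst]; constructor <;> ring
end AffRule

/-- first stage model -/
theorem model1 {St Rule : Type} [Finite Rule] (R : Rule → AffRule St) (Hs : Set St) :
    ∃ (G : Type) (_ : Group G) (S : Subgroup G) (x y : G) (t : St → G) (r : Rule → G),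
      x * y = y * x ∧ (∀ ρ, r ρ * x ^ (R ρ).m1 * (r ρ)⁻¹ = x ^ (R ρ).l1) ∧
      (∀ ρ, r ρ * y ^ (R ρ).m2 * (r ρ)⁻¹ = y ^ (R ρ).l2) ∧
      (∀ ρ, r ρ * transl x y (t (R ρ).s) (R ρ).i1 (R ρ).i2 * (r ρ)⁻¹ =
        transl x y (t (R ρ).s') (R ρ).j1 (R ρ).j2) ∧
      (∀ ρ, r ρ ∈ S) ∧ (∀ s L M, transl x y (t s) L M ∈ S ↔ AConn R Hs (s, L, M)) ∧
      (∀ n : ℤ, x ^ n = 1 → n = 0) ∧ (∀ n : ℤ, y ^ n = 1 → n = 0) ∧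
      (∀ s, ∀ n : ℤ, t s ^ n = 1 → n = 0) := by
  obtain ⟨G', hG', j, r, S', h1, h2, h3, h4⟩ := multi_hnn' (G := Lamp St) (ι := Rule) (fun _ => Lamp Unit)
    (fun ρ => Lamp.emb (R ρ).src (R ρ).src_inj _ _ (R ρ).src_add)
    (fun ρ => Lamp.emb (R ρ).dst (R ρ).dst_inj _ _ (R ρ).dst_add)
    (fun ρ => Lamp.emb_inj _ _ _ _ _ (R ρ).hm1 (R ρ).hm2)
    (fun ρ => Lamp.emb_inj _ _ _ _ _ (R ρ).hl1 (R ρ).hl2) (Lamp.supp (AConn R Hs)) (by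
      intro ρ p
      rw [Lamp.emb_mem _ _ _ _ _ (R ρ).hm1 (R ρ).hm2, Lamp.emb_mem _ _ _ _ _ (R ρ).hl1 (R ρ).hl2]
      have : ∀ z, AConn R Hs ((R ρ).src z) ↔ AConn R Hs ((R ρ).dst z) := fun z => ⟨.fwd ρ z, .bwd ρ z⟩
      simp only [this])
  refine ⟨G', hG', S', j .X, j .Y, fun s => j (.D (s, 0, 0)), r, ?_, ?_, ?_, ?_, h2, ?_, ?_, ?_, ?_⟩
  · rw [← map_mul, ← map_mul]
    congr 1
  · intro ρ
    have := h4 ρ .X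
    rwa [Lamp.emb_X, Lamp.emb_X, map_zpow, map_zpow] at this
  · intro ρ
    have := h4 ρ .Y
    rwa [Lamp.emb_Y, Lamp.emb_Y, map_zpow, map_zpow] at this
  · intro ρ
    have := h4 ρ (.D ((), 0))
    rw [Lamp.emb_D, Lamp.emb_D] at this
    rw [← map_transl, ← map_transl, Lamp.transl_D, Lamp.transl_D]
    simpa [AffRule.src, AffRule.dst] using this
  · intro s L M
    rw [← map_transl, Lamp.transl_D, h3, Lamp.D_mem]
  · intro n hn
    rw [← map_zpow, map_eq_one_iff _ h1, Lamp.X_zpow] at hn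
    have := congrArg (fun p => p.a.1) hn
    simpa using this
  · intro n hn
    rw [← map_zpow, map_eq_one_iff _ h1, Lamp.Y_zpow] at hn
    have := congrArg (fun p => p.a.2) hn
    simpa using this
  · intro s n hn
    rw [← map_zpow, map_eq_one_iff _ h1, Lamp.D_zpow] at hn
    have := congrFun (congrArg Lamp.f hn) (s, 0, 0)
    simpa using this

end ModelPart

section ModelPart2

instance {St Rule : Type} [Finite St] [Finite Rule] : Finite (BGen St Rule) := by
  let F : BGen St Rule → (Fin 4 ⊕ St ⊕ Rule)
    | .x => .inl 0
    | .y => .inl 1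
    | .κ => .inl 2
    | .τ => .inl 3
    | .t s => .inr (.inl s)
    | .r s => .inr (.inr s)
  apply Finite.of_injective F
  intro a b h
  cases a <;> cases b <;> simp_all [F]

instance {St Rule : Type} [Finite St] [Finite Rule] : Finite (RIdx St Rule) := by
  let F : RIdx St Rule → ((Fin 2 ⊕ St ⊕ Rule) ⊕ (Rule ⊕ Rule ⊕ Rule) ⊕ BGen St Rule)
    | .xy => .inl (.inl 0)
    | .sq => .inl (.inl 1)
    | .kt s => .inl (.inr (.inl s))
    | .kr s => .inl (.inr (.inr s))
    | .rx s => .inr (.inl (.inl s))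
    | .ry s => .inr (.inl (.inr (.inl s)))
    | .rt s => .inr (.inl (.inr (.inr s)))
    | .sv s => .inr (.inr s)
  apply Finite.of_injective F
  intro a b h
  cases a <;> cases b <;> simp_all [F]

noncomputable def cosetAct {G : Type} [Group G] (S : Subgroup G) : G →* Equiv.Perm ((G ⧸ S) × ℤ) where
  toFun g := Equiv.prodCongr (MulAction.toPerm g) (Equiv.refl ℤ)
  map_one' := by ext p <;> simp
  map_mul' a b := by ext p <;> simp [mul_smul]

theorem cosetAct_apply {G : Type} [Group G] (S : Subgroup G) (g : G) (p) : cosetAct S g p = (g • p.1, p.2) := rfl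

open Classical in
noncomputable def fibShift {G : Type} [Group G] (S : Subgroup G) : Equiv.Perm ((G ⧸ S) × ℤ) where
  toFun p := (p.1, if p.1 = ((1 : G) : G ⧸ S) then p.2 + 1 else p.2)
  invFun p := (p.1, if p.1 = ((1 : G) : G ⧸ S) then p.2 - 1 else p.2)
  left_inv p := by by_cases h : p.1 = ((1 : G) : G ⧸ S) <;> simp [h, Prod.ext_iff]
  right_inv p := by by_cases h : p.1 = ((1 : G) : G ⧸ S) <;> simp [h, Prod.ext_iff]

theorem fibShift_comm {G : Type} [Group G] (S : Subgroup G) (g : G) (hg : g ∈ S) :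
    Commute (fibShift S) (cosetAct S g) := by
  have key : ∀ q : G ⧸ S, g • q = ((1 : G) : G ⧸ S) ↔ q = ((1 : G) : G ⧸ S) := by
    intro q
    have h1 : g • ((1 : G) : G ⧸ S) = ((1 : G) : G ⧸ S) := by
      rw [MulAction.Quotient.smul_coe, smul_eq_mul, mul_one, eq_comm, QuotientGroup.eq]
      simpa using hg
    constructor
    · intro h
      rw [← h1] at h
      exact smul_left_cancel g h
    · rintro rfl; exact h1
  apply Equiv.ext
  rintro ⟨q, n⟩
  simp only [Equiv.Perm.mul_apply, cosetAct_apply, fibShift, Equiv.coe_fn_mk]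
  by_cases h : q = ((1 : G) : G ⧸ S)
  · rw [if_pos h, if_pos ((key q).2 h)]
  · rw [if_neg h, if_neg (mt (key q).1 h)]

theorem fibShift_pow {G : Type} [Group G] (S : Subgroup G) (f : Equiv.Perm ((G ⧸ S) × ℤ))
    (hf : ∀ n, f (((1 : G) : G ⧸ S), n) = (((1 : G) : G ⧸ S), n + 1)) (n : ℤ) (h : f ^ n = 1) : n = 0 := by
  have h1 : ∀ k : ℕ, ∀ m, (f ^ k) (((1 : G) : G ⧸ S), m) = (((1 : G) : G ⧸ S), m + k) := by
    intro k
    induction k with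
    | zero => simp
    | succ k ih =>
      intro m
      rw [pow_succ, Equiv.Perm.mul_apply, hf, ih]
      simp; ring
  have h2 : f ^ n.natAbs = 1 := by
    rcases Int.natAbs_eq n with e | e
    · rw [e] at h; simpa using h
    · rw [e] at h; simpa using h
  have := h1 n.natAbs 0
  rw [h2] at this
  have := congrArg Prod.snd this
  simp only [Equiv.Perm.one_apply] at this
  omega

theorem fibShift_self {G : Type} [Group G] (S : Subgroup G) (n) :
    fibShift S (((1 : G) : G ⧸ S), n) = (((1 : G) : G ⧸ S), n + 1) := by
  simp [fibShift]

theorem fibShift_commutator {G : Type} [Group G] (S : Subgroup G) (g : G) (hg : g ∉ S) (n) :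
    (fibShift S * cosetAct S g * (fibShift S)⁻¹ * (cosetAct S g)⁻¹) (((1 : G) : G ⧸ S), n) = (((1 : G) : G ⧸ S), n + 1) := by
  have : g⁻¹ • ((1 : G) : G ⧸ S) ≠ ((1 : G) : G ⧸ S) := by
    rw [MulAction.Quotient.smul_coe, smul_eq_mul, mul_one, Ne, QuotientGroup.eq]
    simpa using hg
  rw [Equiv.Perm.mul_apply, Equiv.Perm.mul_apply, ← map_inv, cosetAct_apply]
  have e : (fibShift S)⁻¹ (g⁻¹ • ((1 : G) : G ⧸ S), n) = (g⁻¹ • ((1 : G) : G ⧸ S), n) := by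
    rw [Equiv.Perm.inv_eq_iff_eq]
    simp only [fibShift, Equiv.coe_fn_mk, if_neg this]
  rw [e, Equiv.Perm.mul_apply, cosetAct_apply]
  simp [fibShift]

theorem model2 {St Rule : Type} [Finite St] [Finite Rule] (R : Rule → AffRule St) (Hs : Set St)
    (s0 : St) (R0 : ℕ) (hc : ¬ AConn R Hs (s0, 0, (R0 : ℤ))) :
    ∃ (U : Type) (_ : Group U) (u : BGen St Rule → U),
      u .x * u .y = u .y * u .x ∧ (∀ ρ, u (.r ρ) * u .x ^ (R ρ).m1 * (u (.r ρ))⁻¹ = u .x ^ (R ρ).l1) ∧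
      (∀ ρ, u (.r ρ) * u .y ^ (R ρ).m2 * (u (.r ρ))⁻¹ = u .y ^ (R ρ).l2) ∧
      (∀ ρ, u (.r ρ) * transl (u .x) (u .y) (u (.t (R ρ).s)) (R ρ).i1 (R ρ).i2 * (u (.r ρ))⁻¹ =
        transl (u .x) (u .y) (u (.t (R ρ).s')) (R ρ).j1 (R ρ).j2) ∧
      (∀ ρ, Commute (u .κ) (u (.r ρ))) ∧ (∀ s ∈ Hs, Commute (u .κ) (u (.t s))) ∧
      (u .τ = ((u .y) ^ R0)⁻¹ * u (.t s0) * (u .y) ^ R0) ∧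
      (∀ b, ∀ n : ℤ, u b ^ n = 1 → n = 0) ∧
      (∀ n : ℤ, (u .κ * u .τ * (u .κ)⁻¹ * (u .τ)⁻¹) ^ n = 1 → n = 0) := by
  obtain ⟨G, hG, S, x, y, t, r, hxy, hrx, hry, hrt, hrS, htS, hx, hy, ht⟩ := model1 R Hs
  let ψ : G →* G × Equiv.Perm ((G ⧸ S) × ℤ) × Multiplicative ℤ :=
    MonoidHom.prod (MonoidHom.id G) (MonoidHom.prod (cosetAct S) 1)
  let z : G × Equiv.Perm ((G ⧸ S) × ℤ) × Multiplicative ℤ := (1, 1, Multiplicative.ofAdd 1)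
  have hz : ∀ w, Commute z w := by
    rintro ⟨w1, w2, w3⟩
    simp only [z, Commute, SemiconjBy, Prod.mk_mul_mk, one_mul, mul_one, mul_comm]
  let u : BGen St Rule → G × Equiv.Perm ((G ⧸ S) × ℤ) × Multiplicative ℤ
    | .x => ψ x
    | .y => ψ y
    | .t s => ψ (t s)
    | .r ρ => ψ (r ρ) * z
    | .κ => (1, fibShift S, 1)
    | .τ => ψ ((y ^ R0)⁻¹ * t s0 * y ^ R0)
  have hκ : ∀ g ∈ S, Commute (u .κ) (ψ g) := by
    intro g hg
    have := (fibShift_comm S g hg).eq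
    simp only [u, ψ, Commute, SemiconjBy, MonoidHom.prod_apply, Prod.mk_mul_mk, this]
    simp
  have hrz : ∀ ρ w, (ψ (r ρ) * z) * w * (ψ (r ρ) * z)⁻¹ = ψ (r ρ) * w * (ψ (r ρ))⁻¹ := by
    intro ρ w
    rw [mul_inv_rev, mul_assoc (ψ (r ρ)), (hz w).eq]
    group
  have hψ : ∀ g, (∀ n : ℤ, g ^ n = 1 → n = 0) → ∀ n : ℤ, (ψ g) ^ n = 1 → n = 0 := by
    intro g hg n hn
    rw [← map_zpow] at hn
    exact hg n (congrArg Prod.fst hn)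
  have hτ : (y ^ R0)⁻¹ * t s0 * y ^ R0 ∉ S := by
    have := htS s0 0 R0
    simp only [transl, zpow_natCast, zpow_zero, mul_one] at this
    rw [this]
    exact hc
  refine ⟨_, inferInstance, u, ?_, ?_, ?_, ?_, ?_, ?_, ?_, ?_, ?_⟩
  · simp only [u, ← map_mul, hxy]
  · intro ρ
    simp only [u]
    rw [hrz, ← map_zpow, ← map_zpow, ← map_inv, ← map_mul, ← map_mul, hrx]
  · intro ρ
    simp only [u]
    rw [hrz, ← map_zpow, ← map_zpow, ← map_inv, ← map_mul, ← map_mul, hry]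
  · intro ρ
    simp only [u]
    rw [hrz, ← map_transl, ← map_transl, ← map_inv, ← map_mul, ← map_mul, hrt]
  · intro ρ
    exact (hκ _ (hrS ρ)).mul_right (hz _).symm
  · intro s hs
    apply hκ
    have := (htS s 0 0).2 (.base s hs)
    simpa [transl] using this
  · simp only [u, map_mul, map_inv, map_pow]
  · rintro (_ | _ | s | ρ | _ | _)
    · exact hψ _ hx
    · exact hψ _ hy
    · exact hψ _ (ht s)
    · intro n hn
      have h2 : (u (.r ρ) ^ n).2.2 = Multiplicative.ofAdd n := by
        change (MonoidHom.comp (MonoidHom.snd _ _) (MonoidHom.snd _ _)) (u (.r ρ) ^ n) = _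
        rw [map_zpow]
        simp only [u, z, ψ]
        simp [← ofAdd_zsmul]
      rw [hn] at h2
      exact (Multiplicative.ofAdd.injective h2).symm
    · intro n hn
      have h2 : (u .κ ^ n).2.1 = fibShift S ^ n := by
        simp [u]
      rw [hn] at h2
      exact fibShift_pow S _ (fibShift_self S) n h2.symm
    · apply hψ
      intro n hn
      have e : (y ^ R0)⁻¹ * t s0 * y ^ R0 = (y ^ R0)⁻¹ * t s0 * ((y ^ R0)⁻¹)⁻¹ := by simp
      rw [e, conj_zpow, conj_eq_one_iff] at hn
      exact ht s0 n hn
  · intro n hn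
    apply fibShift_pow S _ (fibShift_commutator S _ hτ) n
    have h2 := congrArg (fun p => p.2.1) hn
    simpa [u, ψ] using h2

theorem zpowersHom_inj {G : Type} [Group G] (g : G) (h : ∀ n : ℤ, g ^ n = 1 → n = 0) :
    Function.Injective (zpowersHom G g) := by
  rw [injective_iff_map_eq_one]
  intro n hn
  rw [zpowersHom_apply] at hn
  exact Multiplicative.toAdd.injective (h _ hn)

theorem nonconn_model {St Rule : Type} [Finite St] [Finite Rule] (R : Rule → AffRule St) (Hs : Set St)
    (s0 : St) (R0 : ℕ) (hc : ¬ AConn R Hs (s0, 0, (R0 : ℤ))) :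
    ∃ (U : Type) (_ : Group U) (f : FreeGroup (MGen St Rule) →* U),
      (∀ i, f (mrel R Hs i) = 1) ∧ f (trel s0 R0) = 1 ∧ f wel ≠ 1 := by
  obtain ⟨U, hU, u, hxy, hrx, hry, hrt, hkr, hkt, hτ, hu, hv⟩ := model2 R Hs s0 R0 hc
  set v := u .κ * u .τ * (u .κ)⁻¹ * (u .τ)⁻¹ with hvdef
  let ε : Multiplicative (ZMod 2) := Multiplicative.ofAdd 1
  have hε : ε ≠ 1 := by decide
  have hε2 : ε * ε = 1 := by decide
  have lift_inf : ∀ (w : U × Multiplicative (ZMod 2)), (∀ n : ℤ, w.1 ^ n = 1 → n = 0) → ∀ n : ℤ, w ^ n = 1 → n = 0 := by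
    intro w hw n hn
    exact hw n (congrArg Prod.fst hn)
  let tgt : Option (BGen St Rule) → U × Multiplicative (ZMod 2)
    | none => (v, ε)
    | some b => (u b, 1)
  obtain ⟨G', hG', j, r, S', h1, h2, h3, h4⟩ := multi_hnn' (G := U × Multiplicative (ZMod 2))
    (ι := Option (BGen St Rule)) (fun _ => Multiplicative ℤ)
    (fun _ => zpowersHom _ (v, 1)) (fun b => zpowersHom _ (tgt b))
    (fun _ => zpowersHom_inj _ (lift_inf _ hv))
    (fun b => zpowersHom_inj _ (lift_inf _ (by
      rcases b with _ | b
      · exact hv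
      · exact hu b))) ⊤ (by simp)
  have h5 : ∀ b, r b * j (v, 1) * (r b)⁻¹ = j (tgt b) := by
    intro b
    have := h4 b (Multiplicative.ofAdd 1)
    simpa using this
  let J : U →* G' := j.comp (MonoidHom.inl _ _)
  have hJ : ∀ a, J a = j (a, 1) := fun a => rfl
  let f : FreeGroup (MGen St Rule) →* G' := FreeGroup.lift (Sum.elim (fun b => J (u b)) r)
  have fb : ∀ b, f (bof b) = J (u b) := fun b => by simp [f, bof]
  have fs : ∀ b, f (sof b) = r (some b) := fun b => by simp [f, sof]
  have fy : f yof = r none := by simp [f, yof]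
  have fv : f vel = J v := by simp [vel, fb, hvdef]
  have fw : f wel = j (1, ε) := by
    have : f wel = r none * j (v, 1) * (r none)⁻¹ * (J v)⁻¹ := by simp [wel, fy, fv, hJ]
    rw [this, h5, hJ, ← map_inv, ← map_mul]
    simp [tgt]
  refine ⟨G', hG', f, ?_, ?_, ?_⟩
  · intro i
    cases i with
    | xy =>
      simp only [mrel, map_mul, map_inv, fb]
      rw [← map_mul, hxy, map_mul]; group
    | rx ρ =>
      simp only [mrel, map_mul, map_inv, map_zpow, fb]
      simp only [← map_mul, ← map_inv, ← map_zpow, hrx]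
      simp
    | ry ρ =>
      simp only [mrel, map_mul, map_inv, map_zpow, fb]
      simp only [← map_mul, ← map_inv, ← map_zpow, hry]
      simp
    | rt ρ =>
      simp only [mrel, map_mul, map_inv, map_transl, fb]
      simp only [← map_mul, ← map_inv, ← map_transl, hrt]
      simp
    | kr ρ =>
      simp only [mrel, map_mul, map_inv, fb]
      rw [← map_mul, (hkr ρ).eq, map_mul]; group
    | kt s =>
      by_cases h : s ∈ Hs
      · simp only [mrel, if_pos h, map_mul, map_inv, fb]
        rw [← map_mul, (hkt s h).eq, map_mul]; group
      · simp [mrel, if_neg h]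
    | sq =>
      simp only [mrel, map_mul, fw]
      rw [← map_mul, Prod.mk_mul_mk, hε2, one_mul]
      exact map_one j
    | sv b =>
      simp only [mrel, map_mul, map_inv, fb, fs, fv, hJ, h5]
      simp [tgt]
  · simp only [trel, map_mul, map_inv, map_pow, fb, hτ]
    group
  · rw [fw, Ne, map_eq_one_iff _ h1]
    simpa using hε

end ModelPart2

section TMPart
open Turing

section affine
variable {Q Γ : Type}

def idRule (s : Q × Γ) (s' : Q × Γ) : AffRule (Q × Γ) :=
  ⟨s, 0, 0, 1, 1, s', 0, 0, 1, 1, one_ne_zero, one_ne_zero, one_ne_zero, one_ne_zero⟩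

/-- the affine rules of a Turing machine -/
def tmRule [Inhabited Γ] (M : Q → Γ → Option (Q × TM0.Stmt Γ)) (e : Γ → ℤ) (B : ℤ) (hB : B ≠ 0) :
    (Q × Γ) × (Γ ⊕ Bool) → AffRule (Q × Γ)
  | ((q, a), .inl b) => match M q a with
    | none => idRule (q, a) (q, a)
    | some (q', .write c) => idRule (q, a) (q', c)
    | some (q', .move .right) =>
      ⟨(q, a), 0, e b, 1, B, (q', b), e a, 0, B, 1, one_ne_zero, hB, hB, one_ne_zero⟩
    | some (q', .move .left) =>
      ⟨(q, a), e b, 0, B, 1, (q', b), 0, e a, 1, B, hB, one_ne_zero, one_ne_zero, hB⟩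
  | ((q, a), .inr d) => match M q a with
    | none => ⟨(q, a), 0, 0, 1, 1, (q, a), if d then 1 else 0, if d then 0 else 1, 1, 1,
        one_ne_zero, one_ne_zero, one_ne_zero, one_ne_zero⟩
    | some _ => idRule (q, a) (q, a)

def tmHalt (M : Q → Γ → Option (Q × TM0.Stmt Γ)) : Set (Q × Γ) := {s | M s.1 s.2 = none}

inductive HZ (M : Q → Γ → Option (Q × TM0.Stmt Γ)) (e : Γ → ℤ) (B : ℤ) : (Q × Γ) × ℤ × ℤ → Prop
  | halt (q a L R) (h : M q a = none) : HZ M e B ((q, a), L, R)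
  | write (q a L R q' c) (h : M q a = some (q', .write c)) (h' : HZ M e B ((q', c), L, R)) :
      HZ M e B ((q, a), L, R)
  | right (q a L R q' b) (h : M q a = some (q', .move .right))
      (h' : HZ M e B ((q', b), e a + B * L, R)) : HZ M e B ((q, a), L, e b + B * R)
  | left (q a L R q' b) (h : M q a = some (q', .move .left))
      (h' : HZ M e B ((q', b), L, e a + B * R)) : HZ M e B ((q, a), e b + B * L, R)

variable (M : Q → Γ → Option (Q × TM0.Stmt Γ)) (e : Γ → ℤ) (B : ℤ)

theorem digit_inj (he : Function.Injective e) (h0 : ∀ a, 0 ≤ e a) (hlt : ∀ a, e a < B) {a b : Γ} {m n : ℤ}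
    (h : e a + B * m = e b + B * n) : a = b ∧ m = n := by
  have hB : 0 < B := lt_of_le_of_lt (h0 a) (hlt a)
  have h1 : (e a + B * m) % B = e a := by
    rw [Int.add_mul_emod_self_left]; exact Int.emod_eq_of_lt (h0 a) (hlt a)
  have h2 : (e b + B * n) % B = e b := by
    rw [Int.add_mul_emod_self_left]; exact Int.emod_eq_of_lt (h0 b) (hlt b)
  have h3 : e a = e b := by rw [← h1, ← h2, h]
  refine ⟨he h3, ?_⟩
  rw [h3] at h
  exact mul_left_cancel₀ hB.ne' (add_left_cancel h)

theorem HZ.inv_write {q a L R q' c} (h : M q a = some (q', .write c)) (h' : HZ M e B ((q, a), L, R)) :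
    HZ M e B ((q', c), L, R) := by
  generalize hc : ((q, a), L, R) = c0 at h'
  cases h' <;> simp_all

theorem HZ.inv_right {q a L R q'} (h : M q a = some (q', .move .right)) (h' : HZ M e B ((q, a), L, R)) :
    ∃ b R', R = e b + B * R' ∧ HZ M e B ((q', b), e a + B * L, R') := by
  generalize hc : ((q, a), L, R) = c0 at h'
  cases h' <;> simp_all
  exact ⟨_, _, rfl, by assumption⟩

theorem HZ.inv_left {q a L R q'} (h : M q a = some (q', .move .left)) (h' : HZ M e B ((q, a), L, R)) :
    ∃ b L', L = e b + B * L' ∧ HZ M e B ((q', b), L', e a + B * R) := by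
  generalize hc : ((q, a), L, R) = c0 at h'
  cases h' <;> simp_all
  exact ⟨_, _, rfl, by assumption⟩

theorem conn_iff_HZ [Inhabited Γ] (hB : B ≠ 0) (he : Function.Injective e) (h0 : ∀ a, 0 ≤ e a) (hlt : ∀ a, e a < B)
    (c) : AConn (tmRule M e B hB) (tmHalt M) c ↔ HZ M e B c := by
  constructor
  · intro h
    induction h with
    | base s h => exact .halt s.1 s.2 _ _ h
    | fwd ρ z h ih =>
      obtain ⟨⟨q, a⟩, b | d⟩ := ρ
      · rcases hM : M q a with _ | ⟨q', ⟨_ | _⟩ | c⟩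
        · simpa [tmRule, hM, AffRule.src, AffRule.dst, idRule] using ih
        · simp only [tmRule, hM, AffRule.src, AffRule.dst] at ih ⊢
          obtain ⟨b', R', h1, h2⟩ := ih.inv_left _ _ _ hM
          obtain ⟨rfl, rfl⟩ := digit_inj e B he h0 hlt h1
          simpa using h2
        · simp only [tmRule, hM, AffRule.src, AffRule.dst] at ih ⊢
          obtain ⟨b', R', h1, h2⟩ := ih.inv_right _ _ _ hM
          obtain ⟨rfl, rfl⟩ := digit_inj e B he h0 hlt h1
          simpa using h2
        · simp only [tmRule, hM, AffRule.src, AffRule.dst, idRule] at ih ⊢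
          exact ih.inv_write _ _ _ hM
      · rcases hM : M q a with _ | p
        · simp only [tmRule, hM, AffRule.src, AffRule.dst, idRule] at ih ⊢
          exact .halt _ _ _ _ hM
        · simpa [tmRule, hM, AffRule.src, AffRule.dst, idRule] using ih
    | bwd ρ z h ih =>
      obtain ⟨⟨q, a⟩, b | d⟩ := ρ
      · rcases hM : M q a with _ | ⟨q', ⟨_ | _⟩ | c⟩
        · simpa [tmRule, hM, AffRule.src, AffRule.dst, idRule] using ih
        · simp only [tmRule, hM, AffRule.src, AffRule.dst] at ih ⊢
          exact .left _ _ _ _ _ _ hM (by simpa using ih)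
        · simp only [tmRule, hM, AffRule.src, AffRule.dst] at ih ⊢
          exact .right _ _ _ _ _ _ hM (by simpa using ih)
        · simp only [tmRule, hM, AffRule.src, AffRule.dst, idRule] at ih ⊢
          exact .write _ _ _ _ _ _ hM ih
      · rcases hM : M q a with _ | p
        · simp only [tmRule, hM, AffRule.src, AffRule.dst, idRule] at ih ⊢
          exact .halt _ _ _ _ hM
        · simpa [tmRule, hM, AffRule.src, AffRule.dst, idRule] using ih
  · intro h
    induction h with
    | halt q a L R h =>
      have t1 : ∀ L R, AConn (tmRule M e B hB) (tmHalt M) ((q, a), L, R) ↔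
          AConn (tmRule M e B hB) (tmHalt M) ((q, a), L + 1, R) := by
        intro L R
        have h1 := AConn.fwd (R := tmRule M e B hB) (Hs := tmHalt M) ((q, a), .inr true) (L, R)
        have h2 := AConn.bwd (R := tmRule M e B hB) (Hs := tmHalt M) ((q, a), .inr true) (L, R)
        simp [tmRule, h, AffRule.src, AffRule.dst] at h1 h2
        rw [add_comm L 1]
        exact ⟨h1, h2⟩
      have t2 : ∀ L R, AConn (tmRule M e B hB) (tmHalt M) ((q, a), L, R) ↔
          AConn (tmRule M e B hB) (tmHalt M) ((q, a), L, R + 1) := by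
        intro L R
        have h1 := AConn.fwd (R := tmRule M e B hB) (Hs := tmHalt M) ((q, a), .inr false) (L, R)
        have h2 := AConn.bwd (R := tmRule M e B hB) (Hs := tmHalt M) ((q, a), .inr false) (L, R)
        simp [tmRule, h, AffRule.src, AffRule.dst] at h1 h2
        rw [add_comm R 1]
        exact ⟨h1, h2⟩
      have h3 : AConn (tmRule M e B hB) (tmHalt M) ((q, a), 0, 0) := .base _ h
      have h4 : AConn (tmRule M e B hB) (tmHalt M) ((q, a), L, 0) := by
        induction L using Int.induction_on with
        | zero => exact h3
        | succ i ih => exact (t1 _ _).1 ih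
        | pred i ih => exact (t1 _ _).2 (by simpa using ih)
      induction R using Int.induction_on with
      | zero => exact h4
      | succ i ih => exact (t2 _ _).1 ih
      | pred i ih => exact (t2 _ _).2 (by simpa using ih)
    | write q a L R q' c h h' ih =>
      have h2 := AConn.bwd (R := tmRule M e B hB) (Hs := tmHalt M) ((q, a), .inl a) (L, R)
      simp [tmRule, h, AffRule.src, AffRule.dst, idRule] at h2
      exact h2 ih
    | right q a L R q' b h h' ih =>
      have h2 := AConn.bwd (R := tmRule M e B hB) (Hs := tmHalt M) ((q, a), .inl b) (L, R)
      simp [tmRule, h, AffRule.src, AffRule.dst] at h2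
      exact h2 ih
    | left q a L R q' b h h' ih =>
      have h2 := AConn.bwd (R := tmRule M e B hB) (Hs := tmHalt M) ((q, a), .inl b) (L, R)
      simp [tmRule, h, AffRule.src, AffRule.dst] at h2
      exact h2 ih

variable [Inhabited Γ]

def DRep (n : ℤ) (l : ListBlank Γ) : Prop := ∀ i : ℕ, (n / B ^ i) % B = e (l.nth i)

variable {e B}
theorem DRep.cons (h0 : ∀ a, 0 ≤ e a) (hlt : ∀ a, e a < B) {n : ℤ} {l : ListBlank Γ} (h : DRep e B n l) (a : Γ) :
    DRep e B (e a + B * n) (l.cons a) := by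
  have hB : 0 < B := lt_of_le_of_lt (h0 a) (hlt a)
  intro i
  cases i with
  | zero =>
    simp only [pow_zero, Int.ediv_one, Int.add_mul_emod_self_left, ListBlank.nth_zero, ListBlank.head_cons]
    exact Int.emod_eq_of_lt (h0 a) (hlt a)
  | succ i =>
    rw [ListBlank.nth_succ, ListBlank.tail_cons, ← h i, pow_succ', Int.ediv_ediv_of_nonneg hB.le |>.symm,
      Int.add_mul_ediv_left _ _ hB.ne', Int.ediv_eq_zero_of_lt (h0 a) (hlt a), zero_add]

theorem DRep.exists (h0 : ∀ a, 0 ≤ e a) (hlt : ∀ a, e a < B) {n : ℤ} {l : ListBlank Γ} (h : DRep e B n l) :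
    n = e l.head + B * (n / B) ∧ DRep e B (n / B) l.tail := by
  have hB : 0 < B := lt_of_le_of_lt (h0 default) (hlt default)
  constructor
  · have := h 0
    simp only [pow_zero, Int.ediv_one, ListBlank.nth_zero] at this
    rw [← this, Int.emod_add_mul_ediv]
  · intro i
    rw [← ListBlank.nth_succ, ← h (i+1), pow_succ', Int.ediv_ediv_of_nonneg hB.le |>.symm]

theorem DRep.uncons (he : Function.Injective e) (h0 : ∀ a, 0 ≤ e a) (hlt : ∀ a, e a < B) {n : ℤ} {a : Γ} {l : ListBlank Γ}
    (h : DRep e B (e a + B * n) l) : l.head = a ∧ DRep e B n l.tail := by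
  obtain ⟨h1, h2⟩ := h.exists h0 hlt
  obtain ⟨rfl, h3⟩ := digit_inj e B he h0 hlt h1
  rw [h3]
  exact ⟨rfl, h2⟩

variable (e B)
def TRep (c : (Q × Γ) × ℤ × ℤ) (T : TM0.Cfg Γ Q) : Prop :=
  c.1 = (T.q, T.Tape.head) ∧ DRep e B c.2.1 T.Tape.left ∧ DRep e B c.2.2 T.Tape.right

/-- the step function, as in `TM0` -/
def qstep (M : Q → Γ → Option (Q × TM0.Stmt Γ)) : TM0.Cfg Γ Q → Option (TM0.Cfg Γ Q) :=
  fun ⟨q, T⟩ => (M q T.1).map fun ⟨q', a⟩ => ⟨q', match a with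
      | TM0.Stmt.move d => T.move d
      | TM0.Stmt.write a => T.write a⟩

theorem HZ.halts (he : Function.Injective e) (h0 : ∀ a, 0 ≤ e a) (hlt : ∀ a, e a < B) {c} (h : HZ M e B c) :
    ∀ T, TRep e B c T → (StateTransition.eval (qstep M) T).Dom := by
  have stp : ∀ T T', qstep M T = some T' → (StateTransition.eval (qstep M) T').Dom →
      (StateTransition.eval (qstep M) T).Dom := by
    intro T T' h h'
    rwa [StateTransition.reaches_eval (Relation.ReflTransGen.single h)]
  induction h with
  | halt q a L R h =>
    rintro ⟨q, T⟩ ⟨h1, h2, h3⟩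
    simp at h1
    obtain ⟨rfl, rfl⟩ := h1
    have : (⟨q, T⟩ : TM0.Cfg Γ Q) ∈ StateTransition.eval (qstep M) ⟨q, T⟩ := by
      rw [StateTransition.mem_eval]
      refine ⟨.refl, ?_⟩
      simp only [qstep, h, Option.map_none]
    exact Part.dom_iff_mem.2 ⟨_, this⟩
  | write q a L R q' c h h' ih =>
    rintro ⟨q, T⟩ ⟨h1, h2, h3⟩
    simp at h1
    obtain ⟨rfl, rfl⟩ := h1
    apply stp _ ⟨q', T.write c⟩ (by simp only [qstep, h, Option.map_some])
    exact ih _ ⟨rfl, h2, h3⟩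
  | right q a L R q' b h h' ih =>
    rintro ⟨q, T⟩ ⟨h1, h2, h3⟩
    simp at h1
    obtain ⟨rfl, rfl⟩ := h1
    apply stp _ ⟨q', T.move .right⟩ (by simp only [qstep, h, Option.map_some])
    obtain ⟨h4, h5⟩ := h3.uncons he h0 hlt
    exact ih _ ⟨by simp [Tape.move, ← h4], h2.cons h0 hlt _, h5⟩
  | left q a L R q' b h h' ih =>
    rintro ⟨q, T⟩ ⟨h1, h2, h3⟩
    simp at h1
    obtain ⟨rfl, rfl⟩ := h1
    apply stp _ ⟨q', T.move .left⟩ (by simp only [qstep, h, Option.map_some])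
    obtain ⟨h4, h5⟩ := h2.uncons he h0 hlt
    exact ih _ ⟨by simp [Tape.move, ← h4], h5, h3.cons h0 hlt _⟩

theorem HZ.of_halts (h0 : ∀ a, 0 ≤ e a) (hlt : ∀ a, e a < B) (T)
    (h : (StateTransition.eval (qstep M) T).Dom) : ∀ c, TRep e B c T → HZ M e B c := by
  obtain ⟨T', hT'⟩ := Part.dom_iff_mem.1 h
  rw [StateTransition.mem_eval] at hT'
  obtain ⟨hr, hn⟩ := hT'
  induction hr using Relation.ReflTransGen.head_induction_on with
  | refl =>
    rintro ⟨⟨q, a⟩, L, R⟩ ⟨h1, h2, h3⟩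
    obtain ⟨q0, T⟩ := T'
    simp at h1
    obtain ⟨rfl, rfl⟩ := h1
    apply HZ.halt
    simpa [qstep] using hn
  | head hs hr ih =>
    rename_i T1 T2
    rintro ⟨⟨q, a⟩, L, R⟩ ⟨h1, h2, h3⟩
    obtain ⟨q0, T⟩ := T1
    simp at h1
    obtain ⟨rfl, rfl⟩ := h1
    have ih := ih (by
      rw [← StateTransition.reaches_eval (Relation.ReflTransGen.single hs)]; exact h)
    simp only [qstep, Option.mem_def, Option.map_eq_some_iff] at hs
    obtain ⟨⟨q', s⟩, hM, rfl⟩ := hs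
    rcases s with ⟨_ | _⟩ | c
    · obtain ⟨h4, h5⟩ := h2.exists h0 hlt
      simp only at h4 
      rw [h4]
      apply HZ.left _ _ _ _ _ _ hM
      apply ih
      exact ⟨by simp [Tape.move], h5, h3.cons h0 hlt _⟩
    · obtain ⟨h4, h5⟩ := h3.exists h0 hlt
      simp only at h4 
      rw [h4]
      apply HZ.right _ _ _ _ _ _ hM
      apply ih
      exact ⟨by simp [Tape.move], h2.cons h0 hlt _, h5⟩
    · apply HZ.write _ _ _ _ _ _ hM
      apply ih
      exact ⟨rfl, h2, h3⟩

def encL : List Γ → ℤ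
  | [] => 0
  | b :: w => e b + B * encL w

theorem encL_rep (h0 : ∀ a, 0 ≤ e a) (hlt : ∀ a, e a < B) (hd : e default = 0) (w : List Γ) :
    DRep e B (encL e B w) (ListBlank.mk w) := by
  induction w with
  | nil =>
    intro i
    simp only [encL, ListBlank.nth_mk, Int.zero_ediv, Int.zero_emod]
    simp [List.getI, hd]
  | cons b w ih =>
    have := ih.cons h0 hlt b
    simpa [encL] using this

theorem tm_conn_iff (hB : B ≠ 0) (he : Function.Injective e) (h0 : ∀ a, 0 ≤ e a) (hlt : ∀ a, e a < B)
    (hd : e default = 0) (q : Q) (a : Γ) (w : List Γ) :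
    AConn (tmRule M e B hB) (tmHalt M) ((q, a), 0, encL e B w) ↔
      (StateTransition.eval (qstep M) ⟨q, Tape.mk₁ (a :: w)⟩).Dom := by
  rw [conn_iff_HZ M e B hB he h0 hlt]
  have hrep : TRep e B ((q, a), 0, encL e B w) ⟨q, Tape.mk₁ (a :: w)⟩ := by
    refine ⟨rfl, ?_, ?_⟩
    · exact encL_rep e B h0 hlt hd []
    · have := encL_rep e B h0 hlt hd w
      simpa [Tape.mk₁, Tape.mk₂, Tape.mk'] using this
  exact ⟨fun h => h.halts M e B he h0 hlt _ hrep, fun h => HZ.of_halts M e B h0 hlt _ h _ hrep⟩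

end affine
end TMPart

section TMPart2
open Turing

theorem tm0_restrict {Γ Λ : Type} [Inhabited Γ] [Inhabited Λ] (M : TM0.Machine Γ Λ) (S : Set Λ)
    (hS : TM0.Supports M S) :
    ∃ (M' : ↥S → Γ → Option (↥S × TM0.Stmt Γ)) (q0 : ↥S), ∀ l : List Γ,
      (StateTransition.eval (qstep M') ⟨q0, Tape.mk₁ l⟩).Dom ↔ (TM0.eval M l).Dom := by
  classical
  let M' : ↥S → Γ → Option (↥S × TM0.Stmt Γ) := fun q a => (M q.1 a).bind fun p =>
    if h : p.1 ∈ S then some (⟨p.1, h⟩, p.2) else none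
  refine ⟨M', ⟨default, hS.1⟩, fun l => ?_⟩
  have hr : StateTransition.Respects (qstep M') (TM0.step M) (fun a b => (⟨a.q.1, a.Tape⟩ : TM0.Cfg Γ Λ) = b) := by
    rw [StateTransition.fun_respects]
    rintro ⟨q, T⟩
    rcases e : M q.1 T.1 with - | ⟨q', s⟩
    · simp [qstep, TM0.step, M', e, StateTransition.FRespects]
    · have hq : q' ∈ S := hS.2 (by rw [e]; rfl) q.2
      have : qstep M' ⟨q, T⟩ = some ⟨⟨q', hq⟩, match s with
        | TM0.Stmt.move d => T.move d
        | TM0.Stmt.write a => T.write a⟩ := by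
        rcases s with d | c <;> simp [qstep, M', e, hq]
      rw [this]
      apply Relation.TransGen.single
      rcases s with d | c <;> simp [TM0.step, e]
  have := StateTransition.tr_eval_dom hr (a₁ := ⟨⟨default, hS.1⟩, Tape.mk₁ l⟩) rfl
  rw [← this]
  rfl

theorem tm2_gen {K : Type} [DecidableEq K] [Fintype K] {Γ : K → Type} {Λ σ : Type}
    [Inhabited Λ] [Inhabited σ] [Fintype σ] (M : Λ → TM2.Stmt Γ Λ σ) (S : Finset Λ)
    (hS : TM2.Supports M S) (k : K) :
    ∃ (Q : Type) (_ : Finite Q) (M' : Q → TM2to1.Γ' K Γ → Option (Q × TM0.Stmt (TM2to1.Γ' K Γ))) (q0 : Q),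
      ∀ L, (StateTransition.eval (qstep M') ⟨q0, Tape.mk₁ (TM2to1.trInit k L)⟩).Dom ↔ (TM2.eval M k L).Dom := by
  have h1 := TM1to0.tr_supports (TM2to1.tr M) (TM2to1.tr_supports M hS)
  obtain ⟨M', q0, h⟩ := tm0_restrict _ _ h1
  refine ⟨_, Finset.finite_toSet _, M', q0, fun L => ?_⟩
  rw [h, TM1to0.tr_eval, TM2to1.tr_eval_dom]

instance : Fintype PartrecToTM2.K' := ⟨{.main, .rev, .aux, .stack}, by rintro (_ | _ | _ | _) <;> simp⟩

theorem trList_pow (k : ℕ) : PartrecToTM2.trList [2 ^ k] =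
    List.replicate k PartrecToTM2.Γ'.bit0 ++ [.bit1, .cons] := by
  have h : ∃ p : PosNum, (p : ℕ) = 2 ^ k ∧ PartrecToTM2.trPosNum p = List.replicate k PartrecToTM2.Γ'.bit0 ++ [.bit1] := by
    induction k with
    | zero => exact ⟨1, by simp, rfl⟩
    | succ k ih =>
      obtain ⟨p, h1, h2⟩ := ih
      refine ⟨p.bit0, ?_, ?_⟩
      · rw [PosNum.cast_bit0, h1]; ring
      · simp [PartrecToTM2.trPosNum, h2, List.replicate_succ]
  obtain ⟨p, h1, h2⟩ := h
  have h3 : ((2 ^ k : ℕ) : Num) = Num.pos p := by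
    rw [← h1]
    have := Num.of_to_nat (Num.pos p)
    simpa using this
  simp only [PartrecToTM2.trList, PartrecToTM2.trNat, h3, PartrecToTM2.trNum, h2]
  simp

theorem halting_tm (f : ℕ →. ℕ) (hf : Nat.Partrec f) :
    ∃ (Γ : Type) (_ : Inhabited Γ) (_ : Finite Γ) (Q : Type) (_ : Finite Q)
      (M : Q → Γ → Option (Q × TM0.Stmt Γ)) (q0 : Q) (a0 a1 z : Γ), ∀ k,
      (StateTransition.eval (qstep M) ⟨q0, Tape.mk₁ (a0 :: a1 :: List.replicate k z)⟩).Dom ↔ (f k).Dom := by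
  let g : ℕ →. ℕ := fun m => (Nat.rfind fun k => Part.some (decide (2 ^ k = m))).bind f
  have hpow : Computable (fun k : ℕ => 2 ^ k) := by
    have : Primrec (fun k : ℕ => Nat.rec (motive := fun _ => ℕ) 1 (fun _ r => r * 2) k) :=
      Primrec.nat_rec₁ 1 ((Primrec.nat_mul.comp Primrec.snd (Primrec.const 2)).to₂)
    apply this.to_comp.of_eq
    intro k
    induction k with
    | zero => rfl
    | succ k ih => rw [pow_succ, ← ih]
  have hg : Partrec g := by
    apply Partrec.bind _ ((Partrec.nat_iff.2 hf).comp Computable.snd).to₂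
    apply Partrec.rfind
    have h1 : Computable₂ (fun (m k : ℕ) => decide (2 ^ k = m)) := by
      have hp : Computable (fun p : ℕ × ℕ => (2 ^ p.2, p.1)) := (hpow.comp Computable.snd).pair Computable.fst
      have he : Primrec (fun p : ℕ × ℕ => decide (p.1 = p.2)) := (Primrec.eq (α := ℕ)).decide
      exact he.to_comp.comp hp
    exact h1.partrec₂
  have hgd : ∀ k, (g (2 ^ k)).Dom ↔ (f k).Dom := by
    intro k
    have : (Nat.rfind fun k' => Part.some (decide (2 ^ k' = 2 ^ k))) = Part.some k := by
      refine Part.eq_some_iff.2 (Nat.mem_rfind.2 ⟨?_, ?_⟩)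
      · simp
      · intro m hm
        simpa using hm.ne
    simp only [g, this]
    exact iff_of_eq (congrArg Part.Dom (Part.bind_some k f))
  have hg' : @Nat.Partrec' 1 fun v => g v.head := Nat.Partrec'.part_iff₁.2 hg
  obtain ⟨c, hc⟩ := ToPartrec.Code.exists_code hg'
  let _ : Inhabited PartrecToTM2.Λ' := ⟨PartrecToTM2.trNormal c .halt⟩
  have hs := PartrecToTM2.tr_supports c .halt
  obtain ⟨Q, hQ, M', q0, h⟩ := @tm2_gen PartrecToTM2.K' _ _ (fun _ => PartrecToTM2.Γ') PartrecToTM2.Λ' (Option PartrecToTM2.Γ') 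
    ⟨PartrecToTM2.trNormal c .halt⟩ _ _ PartrecToTM2.tr _ hs PartrecToTM2.K'.main
  let enc : PartrecToTM2.Γ' → TM2to1.Γ' PartrecToTM2.K' (fun _ => PartrecToTM2.Γ') := fun a =>
    (false, Function.update (fun _ ↦ none) PartrecToTM2.K'.main (some a))
  refine ⟨_, inferInstance, inferInstance, Q, hQ, M', q0, (true, (enc .cons).2), enc .bit1, enc .bit0, ?_⟩
  intro k
  have h1 := h (PartrecToTM2.trList [2 ^ k])
  have h2 : TM2to1.trInit (Γ := fun _ => PartrecToTM2.Γ') PartrecToTM2.K'.main (PartrecToTM2.trList [2 ^ k]) =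
      (true, (enc .cons).2) :: enc .bit1 :: List.replicate k (enc .bit0) := by
    have h0 : (PartrecToTM2.trList [2 ^ k]).reverse = .cons :: .bit1 :: List.replicate k .bit0 := by
      rw [trList_pow]
      simp
    unfold TM2to1.trInit
    rw [h0]
    change _ :: _ :: List.map enc (List.replicate k .bit0) = _
    rw [List.map_replicate]
    rfl
  rw [h2] at h1
  refine h1.trans ?_
  have h3 := PartrecToTM2.tr_eval c [2 ^ k]
  have h4 := hc ⟨[2 ^ k], rfl⟩
  simp only at h4
  rw [h4] at h3
  have h6 : (⟨some (PartrecToTM2.trNormal c .halt), none,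
        PartrecToTM2.K'.elim (PartrecToTM2.trList [2 ^ k]) [] [] []⟩ : PartrecToTM2.Cfg') =
      ⟨some (PartrecToTM2.trNormal c .halt), none, Function.update (fun _ ↦ [])
        PartrecToTM2.K'.main (PartrecToTM2.trList [2 ^ k])⟩ := by
    congr 1
    funext x
    cases x <;> rfl
  have h5 : (StateTransition.eval (TM2.step PartrecToTM2.tr)
      (⟨some (PartrecToTM2.trNormal c .halt), none,
        PartrecToTM2.K'.elim (PartrecToTM2.trList [2 ^ k]) [] [] []⟩ : PartrecToTM2.Cfg')).Dom ↔
      (f k).Dom := by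
    rw [← hgd]
    exact (congrArg Part.Dom h3).to_iff
  rw [← h5]
  rw [h6]
  rfl

theorem exists_pointed_enc (Γ : Type) [Inhabited Γ] [Finite Γ] :
    ∃ (e : Γ → ℕ) (B : ℕ), Function.Injective e ∧ (∀ a, e a < B) ∧ e default = 0 ∧ B ≠ 0 := by
  classical
  obtain ⟨n, ⟨φ⟩⟩ := Finite.exists_equiv_fin Γ
  have hn : 0 < n := lt_of_le_of_lt (Nat.zero_le _) (φ default).2
  refine ⟨fun a => ((Equiv.swap (φ default) ⟨0, hn⟩) (φ a)).1, n, ?_, ?_, ?_, hn.ne'⟩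
  · intro a b h
    exact φ.injective ((Equiv.swap _ _).injective (Fin.ext h))
  · intro a; exact Fin.isLt _
  · simp

/-- iterated affine numbers -/
def affNum (a z B : ℕ) (k : ℕ) : ℕ := a + B * Nat.rec (motive := fun _ => ℕ) 0 (fun _ r => z + B * r) k

theorem affNum_primrec (a z B : ℕ) : Primrec (affNum a z B) := by
  apply Primrec.nat_add.comp (Primrec.const a)
  apply Primrec.nat_mul.comp (Primrec.const B)
  exact Primrec.nat_rec₁ 0 ((Primrec.nat_add.comp (Primrec.const z) (Primrec.nat_mul.comp (Primrec.const B) Primrec.snd)).to₂)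

theorem machine_exists (f : ℕ →. ℕ) (hf : Nat.Partrec f) :
    ∃ (St Rule : Type) (_ : Finite St) (_ : Finite Rule) (R : Rule → AffRule St) (Hs : Set St) (s0 : St)
      (N : ℕ → ℕ), Primrec N ∧ ∀ k, AConn R Hs (s0, 0, (N k : ℤ)) ↔ (f k).Dom := by
  obtain ⟨Γ, hΓ, hΓf, Q, hQ, M, q0, a0, a1, z, h⟩ := halting_tm f hf
  obtain ⟨e, B, he, hlt, hd, hB⟩ := exists_pointed_enc Γ
  have hB' : (B : ℤ) ≠ 0 := by exact_mod_cast hB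
  refine ⟨Q × Γ, (Q × Γ) × (Γ ⊕ Bool), inferInstance, inferInstance, tmRule M (fun a => (e a : ℤ)) B hB', tmHalt M,
    (q0, a0), affNum (e a1) (e z) B, affNum_primrec _ _ _, ?_⟩
  intro k
  rw [← h k]
  have h2 : ((affNum (e a1) (e z) B k : ℕ) : ℤ) = encL (fun a => (e a : ℤ)) B (a1 :: List.replicate k z) := by
    simp only [affNum, encL]
    push_cast
    congr 2
    induction k with
    | zero => rfl
    | succ k ih =>
      simp only [List.replicate_succ, encL]
      push_cast
      rw [ih]
  have h1 := tm_conn_iff M (fun a => (e a : ℤ)) B hB' (fun a b hab => he (by simpa using hab)) (by simp)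
    (fun a => by exact_mod_cast hlt a) (by simp [hd]) q0 a0 (a1 :: List.replicate k z)
  rw [← h1, h2]

end TMPart2

section FreeProd
open Monoid.CoprodI

theorem neword_prod_ne_one {ι : Type} {G : ι → Type} [∀ i, Group (G i)] {i j : ι}
    (w : Monoid.CoprodI.NeWord G i j) : w.prod ≠ 1 := by
  classical
  intro h
  have h2 : w.toWord = Word.empty := by
    apply (Word.equiv (M := G)).symm.injective
    show w.toWord.prod = Word.prod Word.empty
    rw [Word.prod_empty]; exact h
  exact w.toList_ne_nil (congrArg Word.toList h2)

theorem neword_pow {ι : Type} {G : ι → Type} [∀ i, Group (G i)] {i j : ι} (hij : i ≠ j)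
    (w : Monoid.CoprodI.NeWord G i j) (n : ℕ) :
    ∃ w' : Monoid.CoprodI.NeWord G i j, w'.prod = w.prod ^ (n+1) := by
  induction n with
  | zero => exact ⟨w, by simp⟩
  | succ n ih =>
    obtain ⟨w', h⟩ := ih
    exact ⟨NeWord.append w' hij.symm w, by rw [NeWord.append_prod, h, ← pow_succ]⟩

theorem list_conj {ι : Type} {G : ι → Type} [∀ i, Group (G i)] (n : ℕ) :
    ∀ l : List (Σ i, G i), l.length ≤ n → l ≠ [] → (∀ p ∈ l, p.2 ≠ 1) →
      l.IsChain (fun p q => p.1 ≠ q.1) →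
      (∃ i, ∃ x : G i, IsConj (l.map fun p => (of p.2 : Monoid.CoprodI G)).prod (of x)) ∨
      (∃ i j, i ≠ j ∧ ∃ w : NeWord G i j,
        IsConj (l.map fun p => (of p.2 : Monoid.CoprodI G)).prod w.prod) := by
  classical
  induction n with
  | zero => intro l h hn; simp at h; exact absurd h hn
  | succ n ih =>
    intro l hl hn h1 hc
    rcases l with _ | ⟨a, m⟩
    · exact absurd rfl hn
    rcases List.eq_nil_or_concat m with rfl | ⟨m, b, rfl⟩
    · left; exact ⟨a.1, a.2, by simp only [List.map_singleton, List.prod_singleton]; exact IsConj.refl _⟩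
    rw [List.concat_eq_append] at *
    by_cases hab : a.1 = b.1
    · -- conjugate
      obtain ⟨i, a⟩ := a
      obtain ⟨i', b⟩ := b
      dsimp only at hab
      subst hab
      have hm : m ≠ [] := by
        rintro rfl
        simp at hc
      have hcm : (m ++ [(⟨i, b⟩ : Σ i, G i)]).IsChain (fun p q => p.1 ≠ q.1) :=
        hc.of_cons
      have conj : IsConj ((((⟨i,a⟩ : Σ i, G i) :: (m ++ [(⟨i, b⟩ : Σ i, G i)])).map
          fun p => (of p.2 : Monoid.CoprodI G)).prod)
          ((m.map fun p => (of p.2 : Monoid.CoprodI G)).prod * of (b * a)) := by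
        rw [isConj_iff]
        refine ⟨(of a)⁻¹, ?_⟩
        simp [mul_assoc]
      by_cases hba : b * a = 1
      · rw [hba, map_one, mul_one] at conj
        rcases ih m (by simp at hl; omega) hm (fun p hp => h1 p (by simp [hp])) hcm.left_of_append with
          ⟨i, x, h⟩ | ⟨i, j, hij, w, h⟩
        · exact Or.inl ⟨i, x, conj.trans h⟩
        · exact Or.inr ⟨i, j, hij, w, conj.trans h⟩
      · have hc2 : (m ++ [(⟨i, b * a⟩ : Σ i, G i)]).IsChain (fun p q => p.1 ≠ q.1) := by
          rw [List.isChain_append] at hcm ⊢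
          refine ⟨hcm.1, by simp, ?_⟩
          intro x hx y hy
          simp at hy
          subst hy
          exact hcm.2.2 x hx ⟨i, b⟩ (by simp)
        have := ih (m ++ [⟨i, b * a⟩]) (by simp at hl ⊢; omega) (by simp) (by
          intro p hp
          rw [List.mem_append] at hp
          rcases hp with hp | hp
          · exact h1 p (by simp [hp])
          · simp only [List.mem_singleton] at hp; subst hp; exact hba) hc2
        rw [List.map_append, List.prod_append, List.map_singleton, List.prod_singleton] at this
        rcases this with ⟨i, x, h⟩ | ⟨i, j, hij, w, h⟩
        · exact Or.inl ⟨i, x, conj.trans h⟩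
        · exact Or.inr ⟨i, j, hij, w, conj.trans h⟩
    · right
      obtain ⟨i, j, w, hw⟩ := NeWord.of_word (⟨a :: (m ++ [b]), fun p hp => h1 p hp, hc⟩ : Word G) (by
        intro h; have := congrArg Word.toList h; simp [Word.empty] at this)
      have hwl : w.toList = a :: (m ++ [b]) := congrArg Word.toList hw
      have hh := w.toList_head?
      have ht := w.toList_getLast?
      rw [hwl] at hh ht
      rw [← List.cons_append, List.getLast?_concat] at ht
      simp at hh ht
      refine ⟨i, j, ?_, w, ?_⟩
      · rw [hh, ht] at hab; exact hab
      · show IsConj _ (w.toWord.prod)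
        rw [hw]
        rfl

theorem coprod_torsion {ι : Type} {G : ι → Type} [∀ i, Group (G i)] (g : Monoid.CoprodI G)
    (hg : IsOfFinOrder g) : g = 1 ∨ ∃ i, ∃ x : G i, IsConj g (of x) := by
  classical
  by_cases h1 : g = 1
  · exact Or.inl h1
  right
  set w := Word.equiv g with hw
  have hwg : w.prod = g := Word.equiv.symm_apply_apply g
  have hne : w.toList ≠ [] := by
    intro h
    apply h1
    rw [← hwg]; simp [Word.prod, h]
  rcases list_conj w.toList.length w.toList le_rfl hne w.ne_one w.chain_ne with
    ⟨i, x, h⟩ | ⟨i, j, hij, v, h⟩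
  · refine ⟨i, x, ?_⟩
    rw [← hwg]; exact h
  · exfalso
    have h' : IsConj g v.prod := by rw [← hwg]; exact h
    obtain ⟨n, hn, hp⟩ := isOfFinOrder_iff_pow_eq_one.1 hg
    obtain ⟨c, hc⟩ := isConj_iff.1 h'
    obtain ⟨v', hv'⟩ := neword_pow hij v (n-1)
    rw [Nat.sub_add_cancel hn, ← hc, conj_pow, hp] at hv'
    exact neword_prod_ne_one v' (by simp [hv'])

/-- In a free product of two groups, a nontrivial torsion element dies in exactly one factor. -/
theorem coprod_torsion_two {A B Q : Type} [Group A] [Group B] [Group Q]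
    (iA : A →* Q) (iB : B →* Q) (pA : Q →* A) (pB : Q →* B)
    (hA : pA.comp iA = MonoidHom.id A) (hB : pB.comp iB = MonoidHom.id B)
    (hAB : pA.comp iB = 1) (hBA : pB.comp iA = 1)
    (huniv : ∀ {K : Type} [Group K] (f : A →* K) (g : B →* K), ∃ h : Q →* K,
      h.comp iA = f ∧ h.comp iB = g)
    (hgen : ∀ {K : Type} [Group K] (f g : Q →* K), f.comp iA = g.comp iA → f.comp iB = g.comp iB → f = g)
    (w : Q) (hw : IsOfFinOrder w) (h1 : w ≠ 1) :
    (pA w = 1 ∧ pB w ≠ 1) ∨ (pA w ≠ 1 ∧ pB w = 1) := by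
  let G : Bool → Type := fun b => match b with | true => A | false => B
  let _ : ∀ b, Group (G b) := fun b => match b with
    | true => inferInstanceAs (Group A) | false => inferInstanceAs (Group B)
  let oA : A →* Monoid.CoprodI G := (of : G true →* Monoid.CoprodI G)
  let oB : B →* Monoid.CoprodI G := (of : G false →* Monoid.CoprodI G)
  let fam : ∀ b, G b →* Q := fun b => match b with | true => iA | false => iB
  let back : Monoid.CoprodI G →* Q := Monoid.CoprodI.lift fam
  have eA : ∀ x : A, back (oA x) = iA x := fun x =>
    Monoid.CoprodI.lift_of fam (i := true) x
  have eB : ∀ x : B, back (oB x) = iB x := fun x =>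
    Monoid.CoprodI.lift_of fam (i := false) x
  obtain ⟨h, hhA, hhB⟩ := huniv oA oB
  have hback : back.comp h = MonoidHom.id Q := by
    apply hgen
    · rw [MonoidHom.comp_assoc, hhA]
      ext x
      exact eA x
    · rw [MonoidHom.comp_assoc, hhB]
      ext x
      exact eB x
  have hb : ∀ q, back (h q) = q := fun q => DFunLike.congr_fun hback q
  rcases coprod_torsion (h w) (h.isOfFinOrder hw) with h0 | ⟨i, x, hx⟩
  · exfalso; apply h1; rw [← hb w, h0, map_one]
  · obtain ⟨c, hc⟩ := isConj_iff.1 hx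
    have hc2 : back c * w * (back c)⁻¹ = back (of x) := by
      rw [← hc]; simp [hb]
    cases i with
    | true =>
      change back c * w * (back c)⁻¹ = back (oA x) at hc2
      rw [eA] at hc2
      right
      have hpB : pB w = 1 := by
        have := congrArg pB hc2
        have t : pB (iA x) = 1 := DFunLike.congr_fun hBA x
        rw [t] at this
        simpa [mul_inv_eq_one] using this
      refine ⟨fun hpA => h1 ?_, hpB⟩
      have := congrArg pA hc2
      have t : pA (iA x) = x := DFunLike.congr_fun hA x
      rw [t] at this
      simp [hpA] at this
      have hx1 : iA x = 1 := by rw [← this]; exact map_one iA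
      rw [hx1] at hc2
      simpa [mul_inv_eq_one] using hc2
    | false =>
      change back c * w * (back c)⁻¹ = back (oB x) at hc2
      rw [eB] at hc2
      left
      have hpA : pA w = 1 := by
        have := congrArg pA hc2
        have t : pA (iB x) = 1 := DFunLike.congr_fun hAB x
        rw [t] at this
        simpa [mul_inv_eq_one] using this
      refine ⟨hpA, fun hpB => h1 ?_⟩
      have := congrArg pB hc2
      have t : pB (iB x) = x := DFunLike.congr_fun hB x
      rw [t] at this
      simp [hpB] at this
      have hx1 : iB x = 1 := by rw [← this]; exact map_one iB
      rw [hx1] at hc2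
      simpa [mul_inv_eq_one] using hc2

end FreeProd

section REPart

abbrev PW := List (ℕ × Bool)
abbrev PPres := ℕ × List (List (ℕ × Bool))
/-- certificate items: conjugator, sign, kind of relator, index of relator -/
abbrev CItem := List (ℕ × Bool) × Bool × Bool × ℕ

def redStep (x : ℕ × Bool) (acc : PW) : PW :=
  List.casesOn acc [x] fun hd tl => if x.1 = hd.1 ∧ x.2 = !hd.2 then tl else x :: hd :: tl

theorem reduce_foldr (w : PW) : FreeGroup.reduce w = w.foldr redStep [] := by
  induction w with
  | nil => rfl
  | cons x w ih =>
    rw [FreeGroup.reduce.cons, List.foldr_cons, ← ih]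
    rfl

theorem primrec_redStep : Primrec₂ redStep := by
  unfold redStep
  refine Primrec.list_casesOn (f := fun p : (ℕ × Bool) × PW => p.2)
    (h := fun (q : (ℕ × Bool) × PW) (r : (ℕ × Bool) × PW) =>
      if q.1.1 = r.1.1 ∧ q.1.2 = !r.1.2 then r.2 else q.1 :: r.1 :: r.2) Primrec.snd
    (Primrec.list_cons.comp Primrec.fst (Primrec.const [])) ?_
  refine Primrec.ite (c := fun q : ((ℕ × Bool) × PW) × (ℕ × Bool) × PW =>
    q.1.1.1 = q.2.1.1 ∧ q.1.1.2 = !q.2.1.2) ?_ ?_ ?_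
  · refine PrimrecPred.and ?_ ?_
    · exact Primrec.eq.comp (Primrec.fst.comp (Primrec.fst.comp Primrec.fst))
        (Primrec.fst.comp (Primrec.fst.comp Primrec.snd))
    · exact Primrec.eq.comp (Primrec.snd.comp (Primrec.fst.comp Primrec.fst))
        (Primrec.not.comp (Primrec.snd.comp (Primrec.fst.comp Primrec.snd)))
  · exact Primrec.snd.comp Primrec.snd
  · exact Primrec.list_cons.comp (Primrec.fst.comp Primrec.fst)
      (Primrec.list_cons.comp (Primrec.fst.comp Primrec.snd) (Primrec.snd.comp Primrec.snd))

theorem primrec_reduce : Primrec (fun w : PW => FreeGroup.reduce w) := by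
  refine Primrec.of_eq ?_ (fun w => (reduce_foldr w).symm)
  exact Primrec.list_foldr (f := fun w : PW => w) (g := fun _ => []) (h := fun _ p => redStep p.1 p.2)
    Primrec.id (Primrec.const _) (primrec_redStep.comp (Primrec.fst.comp Primrec.snd)
      (Primrec.snd.comp Primrec.snd))

theorem primrec_invRev : Primrec (fun w : PW => FreeGroup.invRev w) := by
  unfold FreeGroup.invRev
  refine Primrec.list_reverse.comp (Primrec.list_map Primrec.id ?_)
  exact (Primrec.pair (Primrec.fst.comp Primrec.snd) (Primrec.not.comp (Primrec.snd.comp Primrec.snd)))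

def relWord (P : PPres) (t : Bool) (j : ℕ) : PW :=
  cond t ((P.2[j]?).getD []) [(P.1 + j, true)]

def itemWord (P : PPres) (c : CItem) : PW :=
  c.1 ++ (cond c.2.1 (relWord P c.2.2.1 c.2.2.2) (FreeGroup.invRev (relWord P c.2.2.1 c.2.2.2)) ++
    FreeGroup.invRev c.1)

def certWord (P : PPres) (c : List CItem) : PW := c.flatMap (itemWord P)

theorem primrec_relWord : Primrec (fun q : PPres × Bool × ℕ => relWord q.1 q.2.1 q.2.2) := by
  unfold relWord
  refine Primrec.cond (Primrec.fst.comp Primrec.snd) ?_ ?_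
  · exact Primrec.option_getD.comp (Primrec.list_getElem?.comp (Primrec.snd.comp Primrec.fst)
      (Primrec.snd.comp Primrec.snd)) (Primrec.const [])
  · exact Primrec.list_cons.comp (Primrec.pair (Primrec.nat_add.comp (Primrec.fst.comp Primrec.fst)
      (Primrec.snd.comp Primrec.snd)) (Primrec.const true)) (Primrec.const [])

theorem primrec_itemWord : Primrec₂ itemWord := by
  unfold itemWord
  have hr : Primrec (fun q : PPres × CItem => relWord q.1 q.2.2.2.1 q.2.2.2.2) :=
    primrec_relWord.comp (Primrec.pair Primrec.fst (Primrec.snd.comp (Primrec.snd.comp Primrec.snd)))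
  have hu : Primrec (fun q : PPres × CItem => q.2.1) := Primrec.fst.comp Primrec.snd
  exact Primrec.list_append.comp hu (Primrec.list_append.comp
    (Primrec.cond (Primrec.fst.comp (Primrec.snd.comp Primrec.snd)) hr (primrec_invRev.comp hr))
    (primrec_invRev.comp hu))

theorem primrec_certWord : Primrec₂ certWord := by
  unfold certWord
  exact Primrec.list_flatMap Primrec.snd
    (primrec_itemWord.comp (Primrec.fst.comp Primrec.fst) Primrec.snd)

/-- the primitive recursive test for triviality certificates -/
def trivTest (P : PPres) (w : PW) (k : ℕ) : Bool :=
  decide (FreeGroup.reduce w =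
    FreeGroup.reduce (certWord P ((Encodable.decode (α := List CItem) k).getD [])))

theorem primrec_trivTest : Primrec (fun q : (PPres × PW) × ℕ => trivTest q.1.1 q.1.2 q.2) := by
  unfold trivTest
  refine PrimrecPred.decide ?_
  refine Primrec.eq.comp (primrec_reduce.comp (Primrec.snd.comp Primrec.fst)) (primrec_reduce.comp ?_)
  refine primrec_certWord.comp (Primrec.fst.comp Primrec.fst) ?_
  exact Primrec.option_getD.comp (Primrec.decode.comp Primrec.snd) (Primrec.const [])

theorem presProj_eq_one_iff (P : PPres) (x : FreeGroup ℕ) :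
    presProj P x = 1 ↔ x ∈ Subgroup.normalClosure (presRels P) :=
  PresentedGroup.mk_eq_one_iff

theorem mk_relWord (P : PPres) (t : Bool) (j : ℕ) : presProj P (FreeGroup.mk (relWord P t j)) = 1 := by
  cases t with
  | false =>
    rw [presProj_eq_one_iff]
    exact Subgroup.subset_normalClosure (Or.inr ⟨P.1 + j, Nat.le_add_right _ _, rfl⟩)
  | true =>
    simp only [relWord, cond_true]
    rcases h : P.2[j]? with _ | w
    · simp [← FreeGroup.one_eq_mk]
    · rw [presProj_eq_one_iff]
      exact Subgroup.subset_normalClosure (Or.inl ⟨w, List.mem_of_getElem? h, rfl⟩)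

theorem mk_itemWord (P : PPres) (c : CItem) : FreeGroup.mk (itemWord P c) =
    FreeGroup.mk c.1 * (cond c.2.1 (FreeGroup.mk (relWord P c.2.2.1 c.2.2.2))
      (FreeGroup.mk (relWord P c.2.2.1 c.2.2.2))⁻¹) * (FreeGroup.mk c.1)⁻¹ := by
  unfold itemWord
  cases c.2.1 <;> simp [FreeGroup.inv_mk, mul_assoc, FreeGroup.mul_mk]

theorem mk_certWord_cons (P : PPres) (a : CItem) (c : List CItem) :
    FreeGroup.mk (certWord P (a :: c)) = FreeGroup.mk (itemWord P a) * FreeGroup.mk (certWord P c) := by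
  simp [certWord, FreeGroup.mul_mk]

theorem mk_certWord_append (P : PPres) (a c : List CItem) :
    FreeGroup.mk (certWord P (a ++ c)) = FreeGroup.mk (certWord P a) * FreeGroup.mk (certWord P c) := by
  simp [certWord, FreeGroup.mul_mk]

theorem cert_sound (P : PPres) (c : List CItem) : presProj P (FreeGroup.mk (certWord P c)) = 1 := by
  induction c with
  | nil => simp [certWord, ← FreeGroup.one_eq_mk]
  | cons a c ih =>
    rw [mk_certWord_cons, map_mul, ih, mul_one, mk_itemWord]
    have := mk_relWord P a.2.2.1 a.2.2.2
    rw [map_mul, map_mul, map_inv]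
    cases a.2.1
    · rw [cond_false, map_inv, this, inv_one, mul_one, mul_inv_cancel]
    · rw [cond_true, this, mul_one, mul_inv_cancel]

theorem cert_inv (P : PPres) (c : List CItem) :
    ∃ c', FreeGroup.mk (certWord P c') = (FreeGroup.mk (certWord P c))⁻¹ := by
  induction c with
  | nil => exact ⟨[], by simp [certWord, ← FreeGroup.one_eq_mk]⟩
  | cons a c ih =>
    obtain ⟨c', h⟩ := ih
    refine ⟨c' ++ [(a.1, !a.2.1, a.2.2)], ?_⟩
    rw [mk_certWord_append, h, mk_certWord_cons, mk_certWord_cons, mul_inv_rev]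
    congr 1
    rw [mk_itemWord, mk_itemWord]
    cases a.2.1 <;> simp [certWord, ← FreeGroup.one_eq_mk, mul_assoc]

theorem cert_complete (P : PPres) (x : FreeGroup ℕ) (hx : presProj P x = 1) :
    ∃ c, FreeGroup.mk (certWord P c) = x := by
  rw [presProj_eq_one_iff] at hx
  refine Subgroup.closure_induction (p := fun x _ => ∃ c, FreeGroup.mk (certWord P c) = x)
    ?_ ?_ ?_ ?_ hx
  · intro y hy
    obtain ⟨r, hr, hy⟩ := Group.mem_conjugatesOfSet_iff.1 hy
    obtain ⟨u, hu⟩ := isConj_iff.1 hy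
    obtain ⟨t, j, hrel⟩ : ∃ t j, FreeGroup.mk (relWord P t j) = r := by
      rcases hr with ⟨w, hw, rfl⟩ | ⟨i, hi, rfl⟩
      · obtain ⟨j, hj⟩ := List.mem_iff_getElem?.1 hw
        exact ⟨true, j, by simp [relWord, hj]⟩
      · exact ⟨false, i - P.1, by simp [relWord, Nat.add_sub_cancel' hi, FreeGroup.of]⟩
    refine ⟨[(u.toWord, true, t, j)], ?_⟩
    rw [mk_certWord_cons, mk_itemWord]
    simp [certWord, ← FreeGroup.one_eq_mk, hrel, hu, FreeGroup.mk_toWord]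
  · exact ⟨[], by simp [certWord, ← FreeGroup.one_eq_mk]⟩
  · rintro x y _ _ ⟨c, rfl⟩ ⟨d, rfl⟩
    exact ⟨c ++ d, mk_certWord_append _ _ _⟩
  · rintro x _ ⟨c, rfl⟩
    exact cert_inv P c

theorem trivTest_iff (P : PPres) (w : PW) :
    presProj P (FreeGroup.mk w) = 1 ↔ ∃ k, trivTest P w k = true := by
  constructor
  · intro h
    obtain ⟨c, hc⟩ := cert_complete P _ h
    refine ⟨Encodable.encode c, ?_⟩
    simp only [trivTest, Encodable.encodek, Option.getD_some, decide_eq_true_eq]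
    exact FreeGroup.reduce.sound hc.symm
  · rintro ⟨k, hk⟩
    simp only [trivTest, decide_eq_true_eq] at hk
    rw [FreeGroup.reduce.exact hk]
    exact cert_sound _ _

end REPart

section CodingPart

noncomputable def presLift (P : PPres) {K : Type} [Group K] (f : FreeGroup ℕ →* K)
    (h : ∀ r ∈ presRels P, f r = 1) : presGroup P →* K :=
  QuotientGroup.lift (Subgroup.normalClosure (presRels P)) f
    (fun x hx => by
      have : Subgroup.normalClosure (presRels P) ≤ f.ker :=
        Subgroup.normalClosure_le_normal (fun r hr => h r hr)
      exact this hx)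

theorem presLift_proj (P : PPres) {K : Type} [Group K] (f : FreeGroup ℕ →* K)
    (h : ∀ r ∈ presRels P, f r = 1) (x : FreeGroup ℕ) : presLift P f h (presProj P x) = f x := rfl

theorem presProj_surj (P : PPres) : Function.Surjective (presProj P) := PresentedGroup.mk_surjective _

theorem presProj_rel (P : PPres) (r : FreeGroup ℕ) (hr : r ∈ presRels P) : presProj P r = 1 :=
  (presProj_eq_one_iff P r).2 (Subgroup.subset_normalClosure hr)

theorem pres_hom_ext (P : PPres) {K : Type} [Group K] (f g : presGroup P →* K)
    (h : ∀ i, f (presProj P (FreeGroup.of i)) = g (presProj P (FreeGroup.of i))) : f = g := by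
  have : f.comp (presProj P) = g.comp (presProj P) := FreeGroup.ext_hom _ _ h
  ext x
  obtain ⟨y, rfl⟩ := presProj_surj P x
  exact DFunLike.congr_fun this y

def CopySpec {X : Type} (c : X → ℕ) (rels : Set (FreeGroup X)) (P : PPres) : Prop :=
  ∀ {K : Type} [Group K] (f : FreeGroup ℕ →* K), (∀ r ∈ presRels P, f r = 1) ↔
    (∀ i, i ∉ Set.range c → f (FreeGroup.of i) = 1) ∧ ∀ r ∈ rels, f (FreeGroup.map c r) = 1

def PairSpec {X : Type} (c1 c2 : X → ℕ) (rels1 rels2 : Set (FreeGroup X)) (P : PPres) : Prop :=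
  ∀ {K : Type} [Group K] (f : FreeGroup ℕ →* K), (∀ r ∈ presRels P, f r = 1) ↔
    (∀ i, i ∉ Set.range c1 → i ∉ Set.range c2 → f (FreeGroup.of i) = 1) ∧
    (∀ r ∈ rels1, f (FreeGroup.map c1 r) = 1) ∧ ∀ r ∈ rels2, f (FreeGroup.map c2 r) = 1

theorem map_agree {X K : Type} [Group K] (c : X → ℕ) (f g : FreeGroup ℕ →* K)
    (h : ∀ x, f (FreeGroup.of (c x)) = g (FreeGroup.of (c x))) (r : FreeGroup X) :
    f (FreeGroup.map c r) = g (FreeGroup.map c r) := by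
  have : f.comp (FreeGroup.map c) = g.comp (FreeGroup.map c) :=
    FreeGroup.ext_hom _ _ (fun x => by simpa using h x)
  exact DFunLike.congr_fun this r

theorem PairSpec.symm {X : Type} {c1 c2 : X → ℕ} {rels1 rels2 : Set (FreeGroup X)} {P : PPres}
    (h : PairSpec c1 c2 rels1 rels2 P) : PairSpec c2 c1 rels2 rels1 P := by
  intro K _ f
  rw [h f]
  constructor
  · rintro ⟨a, b, c⟩; exact ⟨fun i h1 h2 => a i h2 h1, c, b⟩
  · rintro ⟨a, b, c⟩; exact ⟨fun i h1 h2 => a i h2 h1, c, b⟩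

/-- the letters outside the range of `c` are erased -/
noncomputable def eraseHom {X : Type} (c : X → ℕ) : FreeGroup ℕ →* FreeGroup ℕ :=
  open Classical in FreeGroup.lift (fun i => if i ∈ Set.range c then FreeGroup.of i else 1)

theorem eraseHom_in {X : Type} (c : X → ℕ) (i : ℕ) (h : i ∈ Set.range c) :
    eraseHom c (FreeGroup.of i) = FreeGroup.of i := by
  unfold eraseHom
  rw [FreeGroup.lift_apply_of, if_pos h]

theorem eraseHom_out {X : Type} (c : X → ℕ) (i : ℕ) (h : i ∉ Set.range c) :
    eraseHom c (FreeGroup.of i) = 1 := by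
  unfold eraseHom
  rw [FreeGroup.lift_apply_of, if_neg h]

section pair
variable {X : Type} {c1 c2 : X → ℕ} {rels1 rels2 : Set (FreeGroup X)} {P P1 P2 : PPres}

theorem copy_out (h1 : CopySpec c1 rels1 P1) (i : ℕ) (hi : i ∉ Set.range c1) :
    presProj P1 (FreeGroup.of i) = 1 :=
  ((h1 (presProj P1)).1 (presProj_rel P1)).1 i hi

theorem copy_rel (h1 : CopySpec c1 rels1 P1) (r) (hr : r ∈ rels1) :
    presProj P1 (FreeGroup.map c1 r) = 1 :=
  ((h1 (presProj P1)).1 (presProj_rel P1)).2 r hr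

theorem pair_kill1 (hd : Disjoint (Set.range c1) (Set.range c2)) (h1 : CopySpec c1 rels1 P1)
    (hP : PairSpec c1 c2 rels1 rels2 P) : ∀ r ∈ presRels P, presProj P1 r = 1 := by
  rw [hP]
  refine ⟨fun i hi _ => copy_out h1 i hi, fun r hr => copy_rel h1 r hr, fun r _ => ?_⟩
  rw [map_agree c2 (presProj P1) 1 _ r]
  · rfl
  · intro x
    exact copy_out h1 _ (fun hx => Set.disjoint_left.1 hd hx ⟨x, rfl⟩)

theorem pair_inj1 (hd : Disjoint (Set.range c1) (Set.range c2)) (h1 : CopySpec c1 rels1 P1)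
    (hP : PairSpec c1 c2 rels1 rels2 P) :
    ∀ r ∈ presRels P1, ((presProj P).comp (eraseHom c1)) r = 1 := by
  rw [h1]
  have hk := (hP (presProj P)).1 (presProj_rel P)
  refine ⟨fun i hi => ?_, fun r hr => ?_⟩
  · simp [eraseHom_out c1 i hi]
  · rw [map_agree c1 _ (presProj P) _ r]
    · exact hk.2.1 r hr
    · intro x; simp [eraseHom_in c1 (c1 x) ⟨x, rfl⟩]

theorem pair_torsion (hd : Disjoint (Set.range c1) (Set.range c2)) (h1 : CopySpec c1 rels1 P1)
    (h2 : CopySpec c2 rels2 P2) (hP : PairSpec c1 c2 rels1 rels2 P) (x : FreeGroup ℕ)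
    (hx : IsOfFinOrder (presProj P x)) (hx1 : presProj P x ≠ 1) :
    (presProj P1 x = 1 ∧ presProj P2 x ≠ 1) ∨ (presProj P1 x ≠ 1 ∧ presProj P2 x = 1) := by
  have k1 := pair_kill1 hd h1 hP
  have k2 := pair_kill1 hd.symm h2 hP.symm
  have j1 := pair_inj1 hd h1 hP
  have j2 := pair_inj1 hd.symm h2 hP.symm
  have d1 : ∀ i, i ∈ Set.range c1 → i ∉ Set.range c2 := fun i => fun a b => Set.disjoint_left.1 hd a b
  have hk := (hP (presProj P)).1 (presProj_rel P)
  have := coprod_torsion_two (presLift P1 _ j1) (presLift P2 _ j2) (presLift P _ k1) (presLift P _ k2)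
    ?_ ?_ ?_ ?_ ?_ ?_ (presProj P x) hx hx1
  · exact this
  · apply pres_hom_ext
    intro i
    show presProj P1 (eraseHom c1 (FreeGroup.of i)) = presProj P1 (FreeGroup.of i)
    by_cases hi : i ∈ Set.range c1
    · rw [eraseHom_in c1 i hi]
    · rw [eraseHom_out c1 i hi, copy_out h1 i hi, map_one]
  · apply pres_hom_ext
    intro i
    show presProj P2 (eraseHom c2 (FreeGroup.of i)) = presProj P2 (FreeGroup.of i)
    by_cases hi : i ∈ Set.range c2
    · rw [eraseHom_in c2 i hi]
    · rw [eraseHom_out c2 i hi, copy_out h2 i hi, map_one]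
  · apply pres_hom_ext
    intro i
    show presProj P1 (eraseHom c2 (FreeGroup.of i)) = 1
    by_cases hi : i ∈ Set.range c2
    · rw [eraseHom_in c2 i hi, copy_out h1 i (fun h => d1 i h hi)]
    · rw [eraseHom_out c2 i hi, map_one]
  · apply pres_hom_ext
    intro i
    show presProj P2 (eraseHom c1 (FreeGroup.of i)) = 1
    by_cases hi : i ∈ Set.range c1
    · rw [eraseHom_in c1 i hi, copy_out h2 i (d1 i hi)]
    · rw [eraseHom_out c1 i hi, map_one]
  · intro K _ f g
    let H : FreeGroup ℕ →* K := FreeGroup.lift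
      (fun i => f (presProj P1 (FreeGroup.of i)) * g (presProj P2 (FreeGroup.of i)))
    have H1 : ∀ i, i ∈ Set.range c1 → H (FreeGroup.of i) = f (presProj P1 (FreeGroup.of i)) := by
      intro i hi
      simp [H, copy_out h2 i (d1 i hi)]
    have H2 : ∀ i, i ∈ Set.range c2 → H (FreeGroup.of i) = g (presProj P2 (FreeGroup.of i)) := by
      intro i hi
      simp [H, copy_out h1 i (fun h => d1 i h hi)]
    have HK : ∀ r ∈ presRels P, H r = 1 := by
      rw [hP]
      refine ⟨fun i hi hi' => ?_, fun r hr => ?_, fun r hr => ?_⟩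
      · simp [H, copy_out h1 i hi, copy_out h2 i hi']
      · rw [map_agree c1 H (f.comp (presProj P1)) (fun x => H1 _ ⟨x, rfl⟩)]
        simp [copy_rel h1 r hr]
      · rw [map_agree c2 H (g.comp (presProj P2)) (fun x => H2 _ ⟨x, rfl⟩)]
        simp [copy_rel h2 r hr]
    refine ⟨presLift P H HK, ?_, ?_⟩
    · apply pres_hom_ext
      intro i
      show H (eraseHom c1 (FreeGroup.of i)) = _
      by_cases hi : i ∈ Set.range c1
      · rw [eraseHom_in c1 i hi, H1 i hi]
      · rw [eraseHom_out c1 i hi, copy_out h1 i hi, map_one, map_one]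
    · apply pres_hom_ext
      intro i
      show H (eraseHom c2 (FreeGroup.of i)) = _
      by_cases hi : i ∈ Set.range c2
      · rw [eraseHom_in c2 i hi, H2 i hi]
      · rw [eraseHom_out c2 i hi, copy_out h2 i hi, map_one, map_one]
  · intro K _ f g hf hg
    apply pres_hom_ext
    intro i
    by_cases hi : i ∈ Set.range c1
    · have := DFunLike.congr_fun hf (presProj P1 (FreeGroup.of i))
      change f (presProj P (eraseHom c1 (FreeGroup.of i))) =
        g (presProj P (eraseHom c1 (FreeGroup.of i))) at this
      rwa [eraseHom_in c1 i hi] at this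
    · by_cases hi' : i ∈ Set.range c2
      · have := DFunLike.congr_fun hg (presProj P2 (FreeGroup.of i))
        change f (presProj P (eraseHom c2 (FreeGroup.of i))) =
          g (presProj P (eraseHom c2 (FreeGroup.of i))) at this
        rwa [eraseHom_in c2 i hi'] at this
      · rw [hk.1 i hi hi', map_one, map_one]

/-- a nontrivial involution of the first copy survives in the free product -/
theorem pair_has_torsion (hd : Disjoint (Set.range c1) (Set.range c2)) (h1 : CopySpec c1 rels1 P1)
    (hP : PairSpec c1 c2 rels1 rels2 P) (w : FreeGroup X) (hw : w * w ∈ rels1)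
    (hne : presProj P1 (FreeGroup.map c1 w) ≠ 1) :
    ∃ x : presGroup P, x ≠ 1 ∧ IsOfFinOrder x := by
  refine ⟨presProj P (FreeGroup.map c1 w), fun h => hne ?_, ?_⟩
  · have := congrArg (presLift P _ (pair_kill1 hd h1 hP)) h
    rwa [presLift_proj, map_one] at this
  · rw [isOfFinOrder_iff_pow_eq_one]
    refine ⟨2, by norm_num, ?_⟩
    have := ((hP (presProj P)).1 (presProj_rel P)).2.1 _ hw
    rwa [map_mul, map_mul, ← pow_two] at this

end pair

section copy
variable {St Rule : Type} (R : Rule → AffRule St) (Hs : Set St)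

/-- all relators of one copy -/
def copyRels (s0 : St) (R0 : ℕ) : Set (FreeGroup (MGen St Rule)) :=
  Set.range (mrel R Hs) ∪ {trel s0 R0}

theorem mrel_of_base {K : Type} [Group K] (s0 : St) (R0 : ℕ) (f : FreeGroup (MGen St Rule) →* K)
    (hf : ∀ b, f (bof b) = 1) : ∀ r ∈ copyRels R Hs s0 R0, f r = 1 := by
  rintro r (⟨i, rfl⟩ | rfl)
  · cases i <;> simp [mrel, hf, wel, vel, transl]
    split_ifs <;> simp [hf]
  · simp [trel, hf]

theorem copy_nonconn [Finite St] [Finite Rule] (c : MGen St Rule → ℕ) (hc : Function.Injective c) (s0 : St) (R0 : ℕ) (P1 : PPres)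
    (h1 : CopySpec c (copyRels R Hs s0 R0) P1) (hn : ¬ AConn R Hs (s0, 0, (R0 : ℤ))) :
    presProj P1 (FreeGroup.map c wel) ≠ 1 := by
  classical
  obtain ⟨U, _, f, hf, ht, hw⟩ := nonconn_model R Hs s0 R0 hn
  let F : FreeGroup ℕ →* U := FreeGroup.lift
    (fun i => if h : ∃ x, c x = i then f (FreeGroup.of h.choose) else 1)
  have hF : ∀ r, F (FreeGroup.map c r) = f r := by
    intro r
    have : F.comp (FreeGroup.map c) = f := by
      apply FreeGroup.ext_hom
      intro x
      have hx : ∃ y, c y = c x := ⟨x, rfl⟩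
      have e : hx.choose = x := hc hx.choose_spec
      simp only [MonoidHom.comp_apply, FreeGroup.map.of, F, FreeGroup.lift_apply_of]
      rw [dif_pos hx, e]
    exact DFunLike.congr_fun this r
  have hK : ∀ r ∈ presRels P1, F r = 1 := by
    rw [h1]
    refine ⟨fun i hi => ?_, ?_⟩
    · simp only [F, FreeGroup.lift_apply_of]
      rw [dif_neg]
      exact fun h => hi h
    · rintro r (⟨i, rfl⟩ | rfl)
      · rw [hF]; exact hf i
      · rw [hF]; exact ht
  intro h
  apply hw
  have := congrArg (presLift P1 F hK) h
  rwa [presLift_proj, hF, map_one] at this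

theorem copy_conn (c : MGen St Rule → ℕ) (hc : Function.Injective c) (s0 : St) (R0 : ℕ) (P1 : PPres)
    (h1 : CopySpec c (copyRels R Hs s0 R0) P1) (hn : AConn R Hs (s0, 0, (R0 : ℤ)))
    (x : presGroup P1) (hx : IsOfFinOrder x) : x = 1 := by
  classical
  have hb : ∀ b, presProj P1 (FreeGroup.of (c (Sum.inl b))) = 1 := by
    intro b
    have := conn_kills R Hs s0 R0 hn ((presProj P1).comp (FreeGroup.map c))
      (fun i => copy_rel h1 _ (Or.inl ⟨i, rfl⟩)) (copy_rel h1 _ (Or.inr rfl)) b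
    simpa [bof] using this
  let t : MGen St Rule → FreeGroup (Option (BGen St Rule)) := Sum.elim (fun _ => 1) FreeGroup.of
  let F : FreeGroup ℕ →* FreeGroup (Option (BGen St Rule)) := FreeGroup.lift
    (fun i => if h : ∃ x, c x = i then t h.choose else 1)
  have hF1 : ∀ x, F (FreeGroup.of (c x)) = t x := by
    intro x
    have hx : ∃ y, c y = c x := ⟨x, rfl⟩
    have e : hx.choose = x := hc hx.choose_spec
    simp only [F, FreeGroup.lift_apply_of]
    rw [dif_pos hx, e]
  have hF0 : ∀ i, i ∉ Set.range c → F (FreeGroup.of i) = 1 := by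
    intro i hi
    simp only [F, FreeGroup.lift_apply_of]
    rw [dif_neg]
    exact fun h => hi h
  have hK : ∀ r ∈ presRels P1, F r = 1 := by
    rw [h1]
    refine ⟨hF0, fun r hr => ?_⟩
    refine mrel_of_base R Hs s0 R0 (F.comp (FreeGroup.map c)) (fun b => ?_) r hr
    simp [bof, hF1, t]
  let back : FreeGroup (Option (BGen St Rule)) →* presGroup P1 :=
    FreeGroup.lift (fun o => presProj P1 (FreeGroup.of (c (Sum.inr o))))
  have hid : back.comp (presLift P1 F hK) = MonoidHom.id _ := by
    apply pres_hom_ext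
    intro i
    show back (F (FreeGroup.of i)) = presProj P1 (FreeGroup.of i)
    by_cases hi : i ∈ Set.range c
    · obtain ⟨x, rfl⟩ := hi
      rw [hF1]
      rcases x with b | o
      · simp [t, hb]
      · simp [t, back]
    · rw [hF0 i hi, copy_out h1 i hi, map_one]
  have h2 : presLift P1 F hK x = 1 := by
    by_contra hne
    exact not_isOfFinOrder_of_isMulTorsionFree hne ((presLift P1 F hK).isOfFinOrder hx)
  have := DFunLike.congr_fun hid x
  simpa [h2] using this.symm

end copy
end CodingPart

section FinalPart

theorem presRels_kill (N : ℕ) (L : List PW) {K : Type} [Group K] (f : FreeGroup ℕ →* K) :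
    (∀ r ∈ presRels (N, L), f r = 1) ↔
      (∀ w ∈ L, f (FreeGroup.mk w) = 1) ∧ ∀ i, N ≤ i → f (FreeGroup.of i) = 1 := by
  constructor
  · intro h
    exact ⟨fun w hw => h _ (Or.inl ⟨w, hw, rfl⟩), fun i hi => h _ (Or.inr ⟨i, hi, rfl⟩)⟩
  · rintro ⟨h1, h2⟩ r (⟨w, hw, rfl⟩ | ⟨i, hi, rfl⟩)
    · exact h1 w hw
    · exact h2 i hi

theorem famList {I : Type} [Finite I] (g : I → FreeGroup ℕ) : ∃ L : List PW,
    ∀ {K : Type} [Group K] (f : FreeGroup ℕ →* K),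
      (∀ w ∈ L, f (FreeGroup.mk w) = 1) ↔ ∀ i, f (g i) = 1 := by
  classical
  have := Fintype.ofFinite I
  refine ⟨(Finset.univ : Finset I).toList.map (fun i => (g i).toWord), ?_⟩
  intro K _ f
  simp [FreeGroup.mk_toWord]

def repW (a : ℕ × Bool) (n : ℕ) : PW := (List.range n).map (fun _ => a)

theorem mk_repW_true (a n : ℕ) : FreeGroup.mk (repW (a, true) n) = FreeGroup.of a ^ n := by
  induction n with
  | zero => simp [repW, ← FreeGroup.one_eq_mk]
  | succ n ih =>
    rw [pow_succ, ← ih]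
    simp [repW, List.range_succ, FreeGroup.of, FreeGroup.mul_mk]

theorem mk_repW_false (a n : ℕ) : FreeGroup.mk (repW (a, false) n) = (FreeGroup.of a ^ n)⁻¹ := by
  induction n with
  | zero => simp [repW, ← FreeGroup.one_eq_mk]
  | succ n ih =>
    rw [pow_succ', mul_inv_rev, ← ih]
    simp [repW, List.range_succ, FreeGroup.of, FreeGroup.mul_mk, FreeGroup.inv_mk, FreeGroup.invRev]

def relW (y t τ : ℕ) (n : ℕ) : PW :=
  repW (y, false) n ++ ((t, true) :: (repW (y, true) n ++ [(τ, false)]))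

theorem mk_relW (y t τ n : ℕ) : FreeGroup.mk (relW y t τ n) =
    (FreeGroup.of y ^ n)⁻¹ * FreeGroup.of t * FreeGroup.of y ^ n * (FreeGroup.of τ)⁻¹ := by
  rw [← mk_repW_false, ← mk_repW_true]
  simp [relW, FreeGroup.of, FreeGroup.mul_mk, FreeGroup.inv_mk, FreeGroup.invRev]

theorem primrec_relW (y t τ : ℕ) : Primrec (relW y t τ) := by
  have h : ∀ a : ℕ × Bool, Primrec (repW a) := fun a =>
    Primrec.list_map Primrec.list_range (Primrec.const a).to₂
  exact Primrec.list_append.comp (h _) (Primrec.list_cons.comp (Primrec.const _)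
    (Primrec.list_append.comp (h _) (Primrec.const _)))

theorem coding (f : ℕ →. ℕ) (hf : Nat.Partrec f) : ∃ (P : ℕ × ℕ → PPres) (P1 P2 : ℕ → PPres),
    Primrec P ∧ Primrec P1 ∧ Primrec P2 ∧
    (∀ k, (f k).Dom → ∀ x : presGroup (P1 k), IsOfFinOrder x → x = 1) ∧
    (∀ k, (f k).Dom → ∀ x : presGroup (P2 k), IsOfFinOrder x → x = 1) ∧
    (∀ k1 k2, ¬ (f k1).Dom ∨ ¬ (f k2).Dom → ∃ x : presGroup (P (k1, k2)), x ≠ 1 ∧ IsOfFinOrder x) ∧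
    (∀ k1 k2, ∀ x : FreeGroup ℕ, IsOfFinOrder (presProj (P (k1, k2)) x) →
      presProj (P (k1, k2)) x ≠ 1 →
      (presProj (P1 k1) x = 1 ∧ presProj (P2 k2) x ≠ 1) ∨
      (presProj (P1 k1) x ≠ 1 ∧ presProj (P2 k2) x = 1)) ∧
    (∀ k1 k2, ∀ x : FreeGroup ℕ, IsOfFinOrder (presProj (P (k1, k2)) x) →
      IsOfFinOrder (presProj (P1 k1) x) ∧ IsOfFinOrder (presProj (P2 k2) x)) := by
  obtain ⟨St, Rule, _, _, R, Hs, s0, N, hN, hconn⟩ := machine_exists f hf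
  obtain ⟨n, ⟨e⟩⟩ := Finite.exists_equiv_fin (MGen St Rule)
  let c1 : MGen St Rule → ℕ := fun x => (e x : ℕ)
  let c2 : MGen St Rule → ℕ := fun x => n + (e x : ℕ)
  have hc1 : Function.Injective c1 := fun a b h => e.injective (Fin.ext h)
  have hc2 : Function.Injective c2 := fun a b h => e.injective (Fin.ext (Nat.add_left_cancel h))
  have r1 : ∀ i, i ∈ Set.range c1 ↔ i < n := by
    intro i
    constructor
    · rintro ⟨x, rfl⟩; exact (e x).2
    · intro h; exact ⟨e.symm ⟨i, h⟩, by simp [c1]⟩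
  have r2 : ∀ i, i ∈ Set.range c2 ↔ n ≤ i ∧ i < n + n := by
    intro i
    constructor
    · rintro ⟨x, rfl⟩; exact ⟨Nat.le_add_right _ _, Nat.add_lt_add_left (e x).2 _⟩
    · rintro ⟨h, h'⟩; exact ⟨e.symm ⟨i - n, by omega⟩, by simp [c2]; omega⟩
  have hd : Disjoint (Set.range c1) (Set.range c2) := by
    rw [Set.disjoint_left]
    intro i h h'
    rw [r1] at h; rw [r2] at h'; omega
  obtain ⟨L1, hL1⟩ := famList (fun i : RIdx St Rule => FreeGroup.map c1 (mrel R Hs i))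
  obtain ⟨L2, hL2⟩ := famList (fun i : RIdx St Rule => FreeGroup.map c2 (mrel R Hs i))
  obtain ⟨K1, hK1⟩ := famList (fun x : MGen St Rule => FreeGroup.of (c1 x))
  obtain ⟨K2, hK2⟩ := famList (fun x : MGen St Rule => FreeGroup.of (c2 x))
  let W : (MGen St Rule → ℕ) → ℕ → PW := fun c k =>
    relW (c (Sum.inl .y)) (c (Sum.inl (.t s0))) (c (Sum.inl .τ)) (N k)
  have hW : ∀ c k, FreeGroup.mk (W c k) = FreeGroup.map c (trel s0 (N k)) := by
    intro c k
    simp [W, mk_relW, trel, bof]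
  have pW : ∀ c, Primrec (W c) := fun c => (primrec_relW _ _ _).comp hN
  let P : ℕ × ℕ → PPres := fun k => (n + n, W c1 k.1 :: W c2 k.2 :: (L1 ++ L2))
  let P1 : ℕ → PPres := fun k => (n + n, W c1 k :: (L1 ++ K2))
  let P2 : ℕ → PPres := fun k => (n + n, W c2 k :: (L2 ++ K1))
  have s1 : ∀ k, CopySpec c1 (copyRels R Hs s0 (N k)) (P1 k) := by
    intro k K _ f
    rw [presRels_kill]
    simp only [List.forall_mem_cons, List.forall_mem_append, hL1, hK2, hW, copyRels,
      Set.union_singleton, Set.forall_mem_insert, Set.forall_mem_range, r1, not_lt]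
    constructor
    · rintro ⟨⟨a, b, c⟩, d⟩
      refine ⟨fun i hi => ?_, a, b⟩
      by_cases h : n + n ≤ i
      · exact d i h
      · obtain ⟨x, rfl⟩ := (r2 i).2 ⟨hi, by omega⟩
        exact c x
    · rintro ⟨a, b, c⟩
      exact ⟨⟨b, c, fun x => a _ (Nat.le_add_right _ _)⟩, fun i hi => a i (by omega)⟩
  have s2 : ∀ k, CopySpec c2 (copyRels R Hs s0 (N k)) (P2 k) := by
    intro k K _ f
    rw [presRels_kill]
    simp only [List.forall_mem_cons, List.forall_mem_append, hL2, hK1, hW, copyRels,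
      Set.union_singleton, Set.forall_mem_insert, Set.forall_mem_range, r2]
    constructor
    · rintro ⟨⟨a, b, c⟩, d⟩
      refine ⟨fun i hi => ?_, a, b⟩
      by_cases h : n + n ≤ i
      · exact d i h
      · obtain ⟨x, rfl⟩ := (r1 i).2 (by omega)
        exact c x
    · rintro ⟨a, b, c⟩
      refine ⟨⟨b, c, fun x => a _ ?_⟩, fun i hi => a i (by omega)⟩
      have := (r1 (c1 x)).1 ⟨x, rfl⟩
      omega
  have sP : ∀ k1 k2, PairSpec c1 c2 (copyRels R Hs s0 (N k1)) (copyRels R Hs s0 (N k2)) (P (k1, k2)) := by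
    intro k1 k2 K _ f
    rw [presRels_kill]
    simp only [List.forall_mem_cons, List.forall_mem_append, hL1, hL2, hW, copyRels,
      Set.union_singleton, Set.forall_mem_insert, Set.forall_mem_range, r1, r2]
    constructor
    · rintro ⟨⟨a, b, c, d⟩, g⟩
      exact ⟨fun i hi hi' => g i (by omega), ⟨a, c⟩, ⟨b, d⟩⟩
    · rintro ⟨g, ⟨a, c⟩, ⟨b, d⟩⟩
      exact ⟨⟨a, b, c, d⟩, fun i hi => g i (by omega) (by omega)⟩
  have hww : ∀ k, wel * wel ∈ copyRels R Hs s0 (N k) := fun k => Or.inl ⟨RIdx.sq, rfl⟩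
  refine ⟨P, P1, P2, ?_, ?_, ?_, ?_, ?_, ?_, ?_, ?_⟩
  · exact Primrec.pair (Primrec.const _) (Primrec.list_cons.comp ((pW c1).comp Primrec.fst)
      (Primrec.list_cons.comp ((pW c2).comp Primrec.snd) (Primrec.const _)))
  · exact Primrec.pair (Primrec.const _) (Primrec.list_cons.comp (pW c1) (Primrec.const _))
  · exact Primrec.pair (Primrec.const _) (Primrec.list_cons.comp (pW c2) (Primrec.const _))
  · intro k hk
    exact copy_conn R Hs c1 hc1 s0 (N k) (P1 k) (s1 k) ((hconn k).2 hk)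
  · intro k hk
    exact copy_conn R Hs c2 hc2 s0 (N k) (P2 k) (s2 k) ((hconn k).2 hk)
  · rintro k1 k2 (h | h)
    · exact pair_has_torsion hd (s1 k1) (sP k1 k2) wel (hww k1)
        (copy_nonconn R Hs c1 hc1 s0 (N k1) (P1 k1) (s1 k1) (fun h' => h ((hconn k1).1 h')))
    · exact pair_has_torsion hd.symm (s2 k2) (PairSpec.symm (sP k1 k2)) wel (hww k2)
        (copy_nonconn R Hs c2 hc2 s0 (N k2) (P2 k2) (s2 k2) (fun h' => h ((hconn k2).1 h')))
  · intro k1 k2 x hx hx1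
    exact pair_torsion hd (s1 k1) (s2 k2) (sP k1 k2) x hx hx1
  · intro k1 k2 x hx
    exact ⟨(presLift (P (k1, k2)) _ (pair_kill1 hd (s1 k1) (sP k1 k2))).isOfFinOrder hx,
      (presLift (P (k1, k2)) _ (pair_kill1 hd.symm (s2 k2) (PairSpec.symm (sP k1 k2)))).isOfFinOrder hx⟩

open Nat.Partrec in
/-- the self-evaluation problem -/
def selfEval : ℕ →. ℕ := fun n =>
  ((Denumerable.ofNat Code n.unpair.2).eval n.unpair.2).bind
    (fun v => cond (decide (v = n.unpair.1)) (Part.some 0) Part.none)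

open Nat.Partrec in
theorem selfEval_dom (b c : ℕ) : (selfEval (Nat.pair b c)).Dom ↔
    b ∈ (Denumerable.ofNat Code c).eval c := by
  rw [Part.dom_iff_mem]
  simp only [selfEval, Nat.unpair_pair, Part.mem_bind_iff]
  constructor
  · rintro ⟨y, v, hv, h⟩
    by_cases e : v = b
    · subst e; exact hv
    · simp [e] at h
  · intro h
    exact ⟨0, b, h, by simp⟩

open Nat.Partrec in
theorem selfEval_partrec : Nat.Partrec selfEval := by
  rw [← Partrec.nat_iff]
  unfold selfEval
  have hu : Computable (fun n : ℕ => n.unpair.2) := (Primrec.snd.comp Primrec.unpair).to_comp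
  refine Partrec.bind (Code.eval_part.comp ((Computable.ofNat Code).comp hu) hu) ?_
  refine Partrec.cond ?_ (Computable.const 0) Partrec.none
  have : PrimrecPred (fun p : ℕ × ℕ => p.2 = p.1.unpair.1) :=
    Primrec.eq.comp Primrec.snd (Primrec.fst.comp (Primrec.unpair.comp Primrec.fst))
  exact this.decide.to_comp

end FinalPart

/-- (Chiodo) There is no general procedure to find a torsion element in a finitely
presented group that is known to have torsion. -/
theorem no_algorithm_finding_torsion_element :
    ¬ ∃ g : ℕ × List (List (ℕ × Bool)) → List (ℕ × Bool), Computable g ∧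
      ∀ P : ℕ × List (List (ℕ × Bool)),
        (∃ x : presGroup P, x ≠ 1 ∧ IsOfFinOrder x) →
          presProj P (FreeGroup.mk (g P)) ≠ 1 ∧
            IsOfFinOrder (presProj P (FreeGroup.mk (g P))) := by
  rintro ⟨g, hg, H⟩
  obtain ⟨P, P1, P2, pP, pP1, pP2, tf1, tf2, htor, hdich, hfo⟩ := coding selfEval selfEval_partrec
  let k1 : ℕ → ℕ := fun c => Nat.pair 0 c
  let k2 : ℕ → ℕ := fun c => Nat.pair 1 c
  have pk1 : Primrec k1 := Primrec₂.natPair.comp (Primrec.const 0) Primrec.id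
  have pk2 : Primrec k2 := Primrec₂.natPair.comp (Primrec.const 1) Primrec.id
  let w : ℕ → List (ℕ × Bool) := fun c => g (P (k1 c, k2 c))
  have cw : Computable w := hg.comp (pP.comp (pk1.pair pk2)).to_comp
  -- always one of the two halting computations fails
  have hfail : ∀ c, ¬ (selfEval (k1 c)).Dom ∨ ¬ (selfEval (k2 c)).Dom := by
    intro c
    by_contra hcon
    push Not at hcon
    have e1 := (selfEval_dom 0 c).1 hcon.1
    have e2 := (selfEval_dom 1 c).1 hcon.2
    exact absurd (Part.mem_unique e1 e2) (by norm_num)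
  have hw := fun c => H (P (k1 c, k2 c)) (htor (k1 c) (k2 c) (hfail c))
  have hd := fun c => hdich (k1 c) (k2 c) (FreeGroup.mk (w c)) (hw c).2 (hw c).1
  have ho := fun c => hfo (k1 c) (k2 c) (FreeGroup.mk (w c)) (hw c).2
  have hA : ∀ c, (selfEval (k1 c)).Dom → presProj (P2 (k2 c)) (FreeGroup.mk (w c)) ≠ 1 := by
    intro c hc
    have h1 := tf1 _ hc _ (ho c).1
    rcases hd c with h | h
    · exact h.2
    · exact absurd h1 h.1
  have hB : ∀ c, (selfEval (k2 c)).Dom → presProj (P1 (k1 c)) (FreeGroup.mk (w c)) ≠ 1 := by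
    intro c hc
    have h1 := tf2 _ hc _ (ho c).2
    rcases hd c with h | h
    · exact absurd h1 h.2
    · exact h.1
  let t1 : ℕ → ℕ → Bool := fun c k => trivTest (P1 (k1 c)) (w c) k
  let t2 : ℕ → ℕ → Bool := fun c k => trivTest (P2 (k2 c)) (w c) k
  have ct1 : Computable₂ t1 := primrec_trivTest.to_comp.comp
    (Computable.pair (Computable.pair ((pP1.comp pk1).to_comp.comp Computable.fst)
      (cw.comp Computable.fst)) Computable.snd)
  have ct2 : Computable₂ t2 := primrec_trivTest.to_comp.comp
    (Computable.pair (Computable.pair ((pP2.comp pk2).to_comp.comp Computable.fst)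
      (cw.comp Computable.fst)) Computable.snd)
  -- the separating function
  let sep : ℕ →. ℕ := fun c =>
    (Nat.rfind (fun k => Part.some (t1 c k || t2 c k))).map (fun k => cond (t1 c k) 1 0)
  have psep : Partrec sep := by
    refine Partrec.map (Partrec.rfind ?_) ?_
    · exact (Primrec.or.to_comp.comp ct1 ct2).partrec
    · exact Computable.cond ct1 (Computable.const 1) (Computable.const 0)
  obtain ⟨e, he⟩ := Nat.Partrec.Code.exists_code.1 (Partrec.nat_iff.1 psep)
  let c := Encodable.encode e
  have hec : (Denumerable.ofNat Nat.Partrec.Code c).eval c = sep c := by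
    rw [Denumerable.ofNat_encode, he]
  have hex : ∃ k, t1 c k = true ∨ t2 c k = true := by
    rcases hd c with h | h
    · obtain ⟨k, hk⟩ := (trivTest_iff _ _).1 h.1
      exact ⟨k, Or.inl hk⟩
    · obtain ⟨k, hk⟩ := (trivTest_iff _ _).1 h.2
      exact ⟨k, Or.inr hk⟩
  have hdom : (Nat.rfind (fun k => Part.some (t1 c k || t2 c k))).Dom := by
    refine Nat.rfind_dom.2 ?_
    obtain ⟨k, hk⟩ := hex
    exact ⟨k, by simpa using hk, fun _ => trivial⟩
  obtain ⟨k, hk⟩ := Part.dom_iff_mem.1 hdom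
  have hspec := Nat.rfind_spec hk
  have hsep : cond (t1 c k) 1 0 ∈ sep c := Part.mem_map _ hk
  rw [← hec] at hsep
  rcases h1 : t1 c k with _ | _
  · have h2 : t2 c k = true := by simpa [h1] using hspec
    rw [h1, cond_false, ← selfEval_dom] at hsep
    exact hA c hsep ((trivTest_iff _ _).2 ⟨k, h2⟩)
  · rw [h1, cond_true, ← selfEval_dom] at hsep
    exact hB c hsep ((trivTest_iff _ _).2 ⟨k, h1⟩)
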